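/- Let 1 ≤ p ≤ ∞ with conjugate exponent p' (1/p + 1/p' = 1). Let u : M_N → M_N be a linear map and let u† : M_N → M_N be its trace adjoint, i.e. tr(u(x)·y) = tr(x·u†(y)) for all x, y ∈ M_N. Then the regular norm of u relative to p equals the regular norm of u† relative to p': sup_{n ≥ 1} ‖u ⊗ id_{M_n} : (M_N ⊗ M_n, ‖·‖_{S_p^N[M_n]}) → (M_N ⊗ M_n, ‖·‖_{S_p^N[M_n]})‖ = sup_{n ≥ 1} ‖u† ⊗ id_{M_n} : (M_N ⊗ M_n, ‖·‖_{S_{p'}^N[M_n]}) → (M_N ⊗ M_n, ‖·‖_{S_{p'}^N[M_n]})‖. (Matrix-algebra case of the second part of Lemma 2.3.) -/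

import Mathlib

open scoped Kronecker ENNReal Classical ComplexOrder
open Matrix

noncomputable section

/-- The operator norm (`S_∞` norm) of a complex matrix, acting on Euclidean space. -/
def opNorm {ι : Type} [Fintype ι] [DecidableEq ι] (a : Matrix ι ι ℂ) : ℝ :=
  ‖LinearMap.toContinuousLinearMap (Matrix.toEuclideanLin a)‖

/-- The Schatten `p`-norm of a complex matrix: the `ℓ^p` norm of its singular values
(the square roots of the eigenvalues of `aᴴ * a`); for `p = ∞` it is the operator norm. -/
def schattenNorm {ι : Type} [Fintype ι] [DecidableEq ι] (p : ℝ≥0∞) (a : Matrix ι ι ℂ) : ℝ :=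
  if p = ∞ then opNorm a
  else (∑ i, Real.sqrt ((Matrix.posSemidef_conjTranspose_mul_self a).isHermitian.eigenvalues i) ^ p.toReal)
      ^ (1 / p.toReal)

/-- Pisier's vector-valued Schatten norm `‖x‖_{S_p^N[M_n]}` on `M_N ⊗ M_n`:
the infimum of `‖a‖_{S_{2p}} ‖y‖_{S_∞} ‖b‖_{S_{2p}}` over factorizations
`x = (a ⊗ 1) · y · (b ⊗ 1)`. -/
def pisierNorm (p : ℝ≥0∞) {N n : ℕ} (x : Matrix (Fin N × Fin n) (Fin N × Fin n) ℂ) : ℝ :=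
  sInf { r | ∃ (a b : Matrix (Fin N) (Fin N) ℂ)
      (y : Matrix (Fin N × Fin n) (Fin N × Fin n) ℂ),
      x = (a ⊗ₖ (1 : Matrix (Fin n) (Fin n) ℂ)) * y * (b ⊗ₖ (1 : Matrix (Fin n) (Fin n) ℂ)) ∧
      r = schattenNorm (2 * p) a * opNorm y * schattenNorm (2 * p) b }

/-- The amplification `u ⊗ id_{M_n} : M_N ⊗ M_n → M_m ⊗ M_n` of a map `u : M_N → M_m`,
acting as `u` on each `M_n`-block entry. -/
def amp {N m n : ℕ} (u : Matrix (Fin N) (Fin N) ℂ → Matrix (Fin m) (Fin m) ℂ)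
    (x : Matrix (Fin N × Fin n) (Fin N × Fin n) ℂ) : Matrix (Fin m × Fin n) (Fin m × Fin n) ℂ :=
  Matrix.of fun ik jl => u (Matrix.of fun i j => x (i, ik.2) (j, jl.2)) ik.1 jl.1

/-- The amplification `id_{M_n} ⊗ u : M_n ⊗ M_N → M_n ⊗ M_m` of a map `u : M_N → M_m`. -/
def ampLeft {n N m : ℕ} (u : Matrix (Fin N) (Fin N) ℂ → Matrix (Fin m) (Fin m) ℂ)
    (x : Matrix (Fin n × Fin N) (Fin n × Fin N) ℂ) : Matrix (Fin n × Fin m) (Fin n × Fin m) ℂ :=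
  Matrix.of fun ki lj => u (Matrix.of fun i j => x (ki.1, i) (lj.1, j)) ki.2 lj.2

/-- The trace pairing `T : M_k ⊗ M_k → ℂ`, with `T(a ⊗ b) = tr(ᵗa·b)`; writing
`z` as a `k×k` matrix of blocks `z_{ij} ∈ M_k`, `T(z) = Σ_{i,j} (z_{ij})_{ij}`. -/
def tracePair {k : ℕ} (z : Matrix (Fin k × Fin k) (Fin k × Fin k) ℂ) : ℂ :=
  ∑ i : Fin k, ∑ j : Fin k, z (i, i) (j, j)

/-- A map `u : M_N → M_m` is completely positive if all its amplifications
`id_{M_n} ⊗ u` preserve positive semidefiniteness. -/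
def CompletelyPositive {N m : ℕ}
    (u : Matrix (Fin N) (Fin N) ℂ → Matrix (Fin m) (Fin m) ℂ) : Prop :=
  ∀ (n : ℕ) (x : Matrix (Fin n × Fin N) (Fin n × Fin N) ℂ),
    x.PosSemidef → (ampLeft u x).PosSemidef

/-- The regular norm (relative to `p`) of `u : M_N → M_m`: the supremum in `[0,∞]`
over `n ≥ 1` of the norms of the amplifications `u ⊗ id_{M_n}` from
`(M_N ⊗ M_n, ‖·‖_{S_p^N[M_n]})` to `(M_m ⊗ M_n, ‖·‖_{S_p^m[M_n]})`. -/
def regNorm (p : ℝ≥0∞) {N m : ℕ}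
    (u : Matrix (Fin N) (Fin N) ℂ → Matrix (Fin m) (Fin m) ℂ) : ℝ≥0∞ :=
  ⨆ (n : ℕ) (x : Matrix (Fin N × Fin (n + 1)) (Fin N × Fin (n + 1)) ℂ)
    (_ : pisierNorm p x ≤ 1), ENNReal.ofReal (pisierNorm p (amp u x))

/-- Pisier's norm `ρ_p` on `M_n ⊗ M_m` (with `q` the conjugate exponent `p'`):
the infimum of `‖γ‖_{S_{2p}} ‖α‖_{S_{2p'}} ‖g‖_{S_∞} ‖δ‖_{S_{2p}} ‖β‖_{S_{2p'}}`
over factorizations `a = (γ ⊗ α) · g · (δ ⊗ β)`. -/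
def rho (p q : ℝ≥0∞) {n m : ℕ} (a : Matrix (Fin n × Fin m) (Fin n × Fin m) ℂ) : ℝ :=
  sInf { r | ∃ (γ δ : Matrix (Fin n) (Fin n) ℂ) (α β : Matrix (Fin m) (Fin m) ℂ)
      (g : Matrix (Fin n × Fin m) (Fin n × Fin m) ℂ),
      a = (γ ⊗ₖ α) * g * (δ ⊗ₖ β) ∧
      r = schattenNorm (2 * p) γ * schattenNorm (2 * q) α * opNorm g *
          schattenNorm (2 * p) δ * schattenNorm (2 * q) β }

/-- The amplification `u ⊗ id_{M_n}` of a map `u` defined only on a subspace `S ⊆ M_N`,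
applied to an element of `M_N ⊗ M_n` all of whose `M_N`-valued block entries lie in `S`. -/
def ampOn {N m n : ℕ} (S : Submodule ℂ (Matrix (Fin N) (Fin N) ℂ))
    (u : S →ₗ[ℂ] Matrix (Fin m) (Fin m) ℂ)
    (x : Matrix (Fin N × Fin n) (Fin N × Fin n) ℂ)
    (h : ∀ k l : Fin n, (Matrix.of fun i j => x (i, k) (j, l)) ∈ S) :
    Matrix (Fin m × Fin n) (Fin m × Fin n) ℂ :=
  Matrix.of fun ik jl => u ⟨Matrix.of fun i j => x (i, ik.2) (j, jl.2), h ik.2 jl.2⟩ ik.1 jl.1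

end


/-- The `ℓ^p` norm of a nonnegative finite family. -/
noncomputable def eigNorm {ι : Type} [Fintype ι] (p : ℝ≥0∞) (d : ι → ℝ) : ℝ :=
  if p = ∞ then ⨆ i, d i else (∑ i, d i ^ p.toReal) ^ (1 / p.toReal)

theorem conjExponent_cases {p q : ℝ≥0∞} (hpq : p⁻¹ + q⁻¹ = 1) :
    (p = 1 ∧ q = ∞) ∨ (p = ∞ ∧ q = 1) ∨
      (p ≠ ∞ ∧ q ≠ ∞ ∧ p.toReal.HolderConjugate q.toReal) := by
  by_cases hp : p = ∞
  · subst hp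
    right; left
    simpa using hpq
  by_cases hq : q = ∞
  · subst hq
    left
    simpa using hpq
  right; right
  refine ⟨hp, hq, ?_⟩
  have hp0 : p ≠ 0 := by rintro rfl; simp at hpq
  have hq0 : q ≠ 0 := by rintro rfl; simp at hpq
  have hp' : 0 < p.toReal := ENNReal.toReal_pos hp0 hp
  have hq' : 0 < q.toReal := ENNReal.toReal_pos hq0 hq
  have h : p.toReal⁻¹ + q.toReal⁻¹ = 1 := by
    have := congrArg ENNReal.toReal hpq
    rwa [ENNReal.toReal_add (by simpa using hp0) (by simpa using hq0), ENNReal.toReal_inv,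
      ENNReal.toReal_inv, ENNReal.toReal_one] at this
  rw [Real.holderConjugate_iff]
  refine ⟨?_, h⟩
  have hlt : p.toReal⁻¹ < 1 := by
    have := inv_pos.2 hq'
    linarith
  exact (inv_lt_one₀ hp').1 hlt

theorem one_le_of_conj {p q : ℝ≥0∞} (hpq : p⁻¹ + q⁻¹ = 1) : 1 ≤ p := by
  rw [← ENNReal.inv_le_one, ← hpq]
  exact le_self_add

theorem sum_mul_le_eigNorm_mul {ι : Type} [Fintype ι] {p q : ℝ≥0∞} (hpq : p⁻¹ + q⁻¹ = 1)
    {d e : ι → ℝ} (hd : ∀ i, 0 ≤ d i)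
    (he : ∀ i, 0 ≤ e i) {w : ι → ι → ℝ} (hw : ∀ i j, 0 ≤ w i j) (hr : ∀ i, ∑ j, w i j = 1)
    (hc : ∀ j, ∑ i, w i j = 1) :
    ∑ i, ∑ j, w i j * d i * e j ≤ eigNorm p d * eigNorm q e := by
  have hle : ∀ (f : ι → ℝ) i, f i ≤ ⨆ i, f i := fun f i => le_ciSup (Finite.bddAbove_range f) i
  rcases conjExponent_cases hpq with ⟨rfl, rfl⟩ | ⟨rfl, rfl⟩ | ⟨hp, hq, hpq'⟩
  · simp only [eigNorm, if_true, ENNReal.one_ne_top, if_false, ENNReal.toReal_one, Real.rpow_one,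
      div_one]
    rw [Finset.sum_mul]
    refine Finset.sum_le_sum fun i _ => ?_
    calc ∑ j, w i j * d i * e j ≤ ∑ j, w i j * d i * ⨆ i, e i :=
          Finset.sum_le_sum fun j _ =>
            mul_le_mul_of_nonneg_left (hle e j) (mul_nonneg (hw i j) (hd i))
      _ = d i * ⨆ i, e i := by rw [← Finset.sum_mul, ← Finset.sum_mul, hr, one_mul]
  · simp only [eigNorm, if_true, ENNReal.one_ne_top, if_false, ENNReal.toReal_one, Real.rpow_one,
      div_one]
    rw [Finset.sum_comm, Finset.mul_sum]
    refine Finset.sum_le_sum fun j _ => ?_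
    calc ∑ i, w i j * d i * e j ≤ ∑ i, w i j * (⨆ i, d i) * e j :=
          Finset.sum_le_sum fun i _ => mul_le_mul_of_nonneg_right
            (mul_le_mul_of_nonneg_left (hle d i) (hw i j)) (he j)
      _ = (⨆ i, d i) * e j := by rw [← Finset.sum_mul, ← Finset.sum_mul, hc, one_mul]
  · simp only [eigNorm, if_neg hp, if_neg hq]
    set P := p.toReal
    set Q := q.toReal
    have hP : 0 < P := hpq'.pos
    have hQ : 0 < Q := hpq'.symm.pos
    have key := Real.inner_le_Lp_mul_Lq (Finset.univ : Finset (ι × ι))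
      (fun x => w x.1 x.2 ^ P⁻¹ * d x.1) (fun x => w x.1 x.2 ^ Q⁻¹ * e x.2) hpq'
    have e1 : ∀ i j, w i j ^ P⁻¹ * d i * (w i j ^ Q⁻¹ * e j) = w i j * d i * e j := by
      intro i j
      have : w i j ^ P⁻¹ * w i j ^ Q⁻¹ = w i j := by
        rw [← Real.rpow_add' (hw i j) (by rw [hpq'.inv_add_inv_eq_one]; exact one_ne_zero),
          hpq'.inv_add_inv_eq_one, Real.rpow_one]
      linear_combination d i * e j * this
    have e2 : ∀ i j, |w i j ^ P⁻¹ * d i| ^ P = w i j * d i ^ P := by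
      intro i j
      rw [abs_of_nonneg (mul_nonneg (Real.rpow_nonneg (hw i j) _) (hd i)),
        Real.mul_rpow (Real.rpow_nonneg (hw i j) _) (hd i), Real.rpow_inv_rpow (hw i j) hP.ne']
    have e3 : ∀ i j, |w i j ^ Q⁻¹ * e j| ^ Q = w i j * e j ^ Q := by
      intro i j
      rw [abs_of_nonneg (mul_nonneg (Real.rpow_nonneg (hw i j) _) (he j)),
        Real.mul_rpow (Real.rpow_nonneg (hw i j) _) (he j), Real.rpow_inv_rpow (hw i j) hQ.ne']
    simp only [Fintype.sum_prod_type, e1, e2, e3] at key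
    have e4 : ∑ i, ∑ j, w i j * d i ^ P = ∑ i, d i ^ P :=
      Finset.sum_congr rfl fun i _ => by rw [← Finset.sum_mul, hr, one_mul]
    have e5 : ∑ i, ∑ j, w i j * e j ^ Q = ∑ j, e j ^ Q := by
      rw [Finset.sum_comm]
      exact Finset.sum_congr rfl fun i _ => by rw [← Finset.sum_mul, hc, one_mul]
    rwa [e4, e5] at key

section Schatten

variable {ι : Type} [Fintype ι] [DecidableEq ι] {p q : ℝ≥0∞}

open scoped Matrix.Norms.L2Operator in
theorem opNorm_sq_eq_iSup {a : Matrix ι ι ℂ} {U : Matrix ι ι ℂ} {d : ι → ℝ}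
    (hU : U ∈ Matrix.unitaryGroup ι ℂ) (hd : ∀ i, 0 ≤ d i)
    (h : aᴴ * a = U * diagonal (fun i => (d i : ℂ)) * Uᴴ) : opNorm a ^ 2 = ⨆ i, d i := by
  have h1 : opNorm a ^ 2 = ‖aᴴ * a‖ := by
    rw [l2_opNorm_conjTranspose_mul_self, sq]; rfl
  have h2 : ‖aᴴ * a‖ = ‖diagonal (fun i => (d i : ℂ))‖ := by
    rw [h]
    have e1 := CStarRing.norm_mul_coe_unitary (U * diagonal (fun i => (d i : ℂ)))
      (star (⟨U, hU⟩ : unitary (Matrix ι ι ℂ)))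
    have e2 := CStarRing.norm_coe_unitary_mul (⟨U, hU⟩ : unitary (Matrix ι ι ℂ))
      (diagonal (fun i => (d i : ℂ)))
    exact e1.trans e2
  rw [h1, h2, l2_opNorm_diagonal]
  cases isEmpty_or_nonempty ι
  · rw [Real.iSup_of_isEmpty]
    simp [Pi.norm_def]
  apply le_antisymm
  · refine (pi_norm_le_iff_of_nonempty _).2 fun i => ?_
    rw [Complex.norm_real, Real.norm_of_nonneg (hd i)]
    exact le_ciSup (Finite.bddAbove_range d) i
  · refine ciSup_le fun i => ?_
    have := norm_le_pi_norm (fun i => (d i : ℂ)) i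
    rwa [Complex.norm_real, Real.norm_of_nonneg (hd i)] at this

theorem sum_eigenvalues_eq {A U : Matrix ι ι ℂ} {d : ι → ℝ} (hA : A.IsHermitian)
    (hU : U ∈ Matrix.unitaryGroup ι ℂ)
    (h : A = U * diagonal (fun i => (d i : ℂ)) * Uᴴ) (φ : ℝ → ℝ) :
    ∑ i, φ (hA.eigenvalues i) = ∑ i, φ (d i) := by
  have hUU : Uᴴ * U = 1 := Matrix.mem_unitaryGroup_iff'.1 hU
  have h1 : A.charpoly.roots = Multiset.map (fun i => (d i : ℂ)) Finset.univ.val := by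
    rw [h, charpoly_mul_comm, ← mul_assoc, hUU, one_mul, charpoly_diagonal, Polynomial.roots_prod]
    · simp
    · simp [Finset.prod_ne_zero_iff, Polynomial.X_sub_C_ne_zero]
  rw [hA.roots_charpoly_eq_eigenvalues] at h1
  have h2 := congrArg (fun m => (Multiset.map (fun z : ℂ => φ z.re) m).sum) h1
  simpa [Multiset.map_map] using h2

theorem schattenNorm_nonneg (p : ℝ≥0∞) (a : Matrix ι ι ℂ) : 0 ≤ schattenNorm p a := by
  unfold schattenNorm
  split_ifs
  · exact norm_nonneg _
  · exact Real.rpow_nonneg (Finset.sum_nonneg fun i _ => Real.rpow_nonneg (Real.sqrt_nonneg _) _) _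

theorem schattenNorm_sq_eq (hp : 1 ≤ p) {a U : Matrix ι ι ℂ} {d : ι → ℝ}
    (hU : U ∈ Matrix.unitaryGroup ι ℂ) (hd : ∀ i, 0 ≤ d i)
    (h : aᴴ * a = U * diagonal (fun i => (d i : ℂ)) * Uᴴ) :
    schattenNorm (2 * p) a ^ 2 = eigNorm p d := by
  unfold schattenNorm eigNorm
  by_cases hp' : p = ∞
  · simp only [hp', if_true, ENNReal.mul_top (two_ne_zero)]
    exact opNorm_sq_eq_iSup hU hd h
  · have h2 : 2 * p ≠ ∞ := ENNReal.mul_ne_top (by simp) hp'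
    have hp0 : 0 < p.toReal := ENNReal.toReal_pos (by positivity) hp'
    rw [if_neg h2, if_neg hp']
    simp only [ENNReal.toReal_mul, ENNReal.toReal_ofNat]
    rw [sum_eigenvalues_eq _ hU h (fun x => Real.sqrt x ^ (2 * p.toReal)), ← Real.rpow_natCast,
      ← Real.rpow_mul (Finset.sum_nonneg fun i _ => Real.rpow_nonneg (Real.sqrt_nonneg _) _)]
    congr 1
    · refine Finset.sum_congr rfl fun i _ => ?_
      rw [Real.rpow_mul (Real.sqrt_nonneg _)]
      norm_cast
      rw [Real.sq_sqrt (hd i)]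
    · push_cast
      field_simp

theorem exists_unitary_diagonal {A : Matrix ι ι ℂ} (hA : A.PosSemidef) :
    ∃ U ∈ Matrix.unitaryGroup ι ℂ, ∃ d : ι → ℝ, (∀ i, 0 ≤ d i) ∧
      A = U * diagonal (fun i => (d i : ℂ)) * Uᴴ := by
  refine ⟨hA.1.eigenvectorUnitary, hA.1.eigenvectorUnitary.2, hA.1.eigenvalues,
    hA.eigenvalues_nonneg, ?_⟩
  have := hA.1.spectral_theorem
  rwa [Unitary.conjStarAlgAut_apply] at this

theorem exists_eigNorm_le_sum_mul (hpq : p⁻¹ + q⁻¹ = 1) {d : ι → ℝ} (hd : ∀ i, 0 ≤ d i) :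
    ∃ e : ι → ℝ, (∀ i, 0 ≤ e i) ∧ eigNorm q e ≤ 1 ∧ eigNorm p d ≤ ∑ i, d i * e i := by
  rcases conjExponent_cases hpq with ⟨rfl, rfl⟩ | ⟨rfl, rfl⟩ | ⟨hp, hq, hpq'⟩
  · refine ⟨fun _ => 1, fun _ => zero_le_one, ?_, ?_⟩
    · simp only [eigNorm, if_true]
      exact Real.iSup_le (fun _ => le_rfl) zero_le_one
    · simp [eigNorm]
  · cases isEmpty_or_nonempty ι
    · refine ⟨fun _ => 1, fun _ => zero_le_one, ?_, ?_⟩ <;> simp [eigNorm]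
    · obtain ⟨i, hi⟩ := Finite.exists_max d
      refine ⟨fun j => if j = i then 1 else 0, fun j => ?_, ?_, ?_⟩
      · positivity
      · simp [eigNorm]
      · simp only [eigNorm, if_true, mul_ite, mul_one, mul_zero, Finset.sum_ite_eq',
          Finset.mem_univ]
        exact ciSup_le hi
  · lift d to ι → NNReal using hd
    obtain ⟨g, hg, hg'⟩ := (NNReal.isGreatest_Lp Finset.univ d hpq').1
    refine ⟨fun i => g i, fun i => (g i).2, ?_, ?_⟩
    · simp only [eigNorm, if_neg hq]
      refine Real.rpow_le_one (by positivity) ?_ (by positivity)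
      exact_mod_cast hg
    · simp only [eigNorm, if_neg hp]
      refine le_of_eq ?_
      exact_mod_cast hg'.symm

theorem trace_mul_re_le (hpq : p⁻¹ + q⁻¹ = 1) {U V : Matrix ι ι ℂ} {d e : ι → ℝ}
    (hU : U ∈ Matrix.unitaryGroup ι ℂ) (hV : V ∈ Matrix.unitaryGroup ι ℂ)
    (hd : ∀ i, 0 ≤ d i) (he : ∀ i, 0 ≤ e i) :
    ((U * diagonal (fun i => (d i : ℂ)) * Uᴴ) *
      (V * diagonal (fun i => (e i : ℂ)) * Vᴴ)).trace.re ≤ eigNorm p d * eigNorm q e := by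
  have hUU : U * Uᴴ = 1 := Matrix.mem_unitaryGroup_iff.1 hU
  have hUU' : Uᴴ * U = 1 := Matrix.mem_unitaryGroup_iff'.1 hU
  have hVV : V * Vᴴ = 1 := Matrix.mem_unitaryGroup_iff.1 hV
  have hVV' : Vᴴ * V = 1 := Matrix.mem_unitaryGroup_iff'.1 hV
  set W := Uᴴ * V with hW
  have hW1 : W * Wᴴ = 1 := by
    rw [hW, conjTranspose_mul, conjTranspose_conjTranspose, mul_assoc, ← mul_assoc V, hVV, one_mul,
      hUU']
  have hW2 : Wᴴ * W = 1 := by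
    rw [hW, conjTranspose_mul, conjTranspose_conjTranspose, mul_assoc, ← mul_assoc U, hUU, one_mul,
      hVV']
  have hsq : ∀ z : ℂ, z * star z = ((Complex.normSq z : ℝ) : ℂ) := fun z => Complex.mul_conj z
  have htr : ((U * diagonal (fun i => (d i : ℂ)) * Uᴴ) *
      (V * diagonal (fun i => (e i : ℂ)) * Vᴴ)).trace
      = (diagonal (fun i => (d i : ℂ)) * W * diagonal (fun i => (e i : ℂ)) * Wᴴ).trace := by
    rw [mul_assoc U, mul_assoc U, trace_mul_comm U, hW, conjTranspose_mul,
      conjTranspose_conjTranspose]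
    simp only [mul_assoc]
  have hsum : (diagonal (fun i => (d i : ℂ)) * W * diagonal (fun i => (e i : ℂ)) * Wᴴ).trace.re
      = ∑ i, ∑ j, Complex.normSq (W i j) * d i * e j := by
    rw [trace, Complex.re_sum]
    refine Finset.sum_congr rfl fun i _ => ?_
    rw [diag_apply, Matrix.mul_apply, Complex.re_sum]
    refine Finset.sum_congr rfl fun j _ => ?_
    rw [mul_diagonal, diagonal_mul, conjTranspose_apply]
    have : (d i : ℂ) * W i j * (e j : ℂ) * star (W i j)
        = ((Complex.normSq (W i j) * d i * e j : ℝ) : ℂ) := by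
      push_cast
      rw [← hsq]
      ring
    rw [this, Complex.ofReal_re]
  rw [htr, hsum]
  refine sum_mul_le_eigNorm_mul hpq hd he (fun i j => Complex.normSq_nonneg _) (fun i => ?_)
    fun j => ?_
  · have := congrFun (congrFun hW1 i) i
    simp only [Matrix.mul_apply, conjTranspose_apply, hsq, one_apply_eq] at this
    exact_mod_cast this
  · have := congrFun (congrFun hW2 j) j
    simp only [Matrix.mul_apply, conjTranspose_apply, one_apply_eq] at this
    simp only [mul_comm (star _), hsq] at this
    exact_mod_cast this

theorem exists_common_diagonalization (b : Matrix ι ι ℂ) :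
    ∃ U ∈ Matrix.unitaryGroup ι ℂ, ∃ V ∈ Matrix.unitaryGroup ι ℂ, ∃ d : ι → ℝ, (∀ i, 0 ≤ d i) ∧
      bᴴ * b = U * diagonal (fun i => (d i : ℂ)) * Uᴴ ∧
      b * bᴴ = V * diagonal (fun i => (d i : ℂ)) * Vᴴ := by
  have h1 := posSemidef_conjTranspose_mul_self b
  have h2 := posSemidef_self_mul_conjTranspose b
  have h3 : h1.1.eigenvalues = h2.1.eigenvalues :=
    (IsHermitian.eigenvalues_eq_eigenvalues_iff h1.1 h2.1).2 (charpoly_mul_comm _ _)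
  refine ⟨h1.1.eigenvectorUnitary, h1.1.eigenvectorUnitary.2, h2.1.eigenvectorUnitary,
    h2.1.eigenvectorUnitary.2, h1.1.eigenvalues, h1.eigenvalues_nonneg, ?_, ?_⟩
  · have := h1.1.spectral_theorem
    rwa [Unitary.conjStarAlgAut_apply] at this
  · have := h2.1.spectral_theorem
    rw [h3]
    rwa [Unitary.conjStarAlgAut_apply] at this

/-- Hölder's inequality for the Hilbert–Schmidt norm of a product. -/
theorem trace_conjTranspose_mul_self_mul_le (hpq : p⁻¹ + q⁻¹ = 1) (a b : Matrix ι ι ℂ) :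
    (aᴴ * a * (b * bᴴ)).trace.re ≤ schattenNorm (2 * p) a ^ 2 * schattenNorm (2 * q) b ^ 2 := by
  obtain ⟨U, hU, -, -, d, hd, ha, -⟩ := exists_common_diagonalization a
  obtain ⟨V', hV', V, hV, e, he, hb', hb⟩ := exists_common_diagonalization b
  rw [schattenNorm_sq_eq (one_le_of_conj hpq) hU hd ha,
    schattenNorm_sq_eq (one_le_of_conj ((add_comm _ _).trans hpq)) hV' he hb', ha, hb]
  exact trace_mul_re_le hpq hU hV hd he

/-- The Schatten norm is attained by duality against a Hermitian matrix. -/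
theorem exists_schattenNorm_le_trace (hpq : p⁻¹ + q⁻¹ = 1) (a : Matrix ι ι ℂ) :
    ∃ b : Matrix ι ι ℂ, bᴴ = b ∧ schattenNorm (2 * q) b ≤ 1 ∧
      schattenNorm (2 * p) a ^ 2 ≤ (aᴴ * a * (b * bᴴ)).trace.re := by
  obtain ⟨U, hU, -, -, d, hd, ha, -⟩ := exists_common_diagonalization a
  have hUU' : Uᴴ * U = 1 := Matrix.mem_unitaryGroup_iff'.1 hU
  obtain ⟨e, he, he1, hde⟩ := exists_eigNorm_le_sum_mul hpq hd
  set D := diagonal (fun i => ((Real.sqrt (e i) : ℝ) : ℂ)) with hD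
  have hDD : D * D = diagonal (fun i => (e i : ℂ)) := by
    rw [hD, diagonal_mul_diagonal]
    congr 1
    funext i
    rw [← Complex.ofReal_mul, Real.mul_self_sqrt (he i)]
  have hDH : Dᴴ = D := by
    rw [hD, diagonal_conjTranspose]
    congr 1
    funext i
    simp
  have hbH : (U * D * Uᴴ)ᴴ = U * D * Uᴴ := by
    simp only [conjTranspose_mul, conjTranspose_conjTranspose, hDH, mul_assoc]
  have hbb : (U * D * Uᴴ) * (U * D * Uᴴ) = U * diagonal (fun i => (e i : ℂ)) * Uᴴ := by
    rw [← hDD]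
    calc (U * D * Uᴴ) * (U * D * Uᴴ) = U * D * (Uᴴ * U) * D * Uᴴ := by simp only [mul_assoc]
      _ = _ := by rw [hUU', mul_one]; simp only [mul_assoc]
  refine ⟨U * D * Uᴴ, hbH, ?_, ?_⟩
  · have := schattenNorm_sq_eq (p := q) (one_le_of_conj ((add_comm _ _).trans hpq))
      (a := U * D * Uᴴ) hU he (by rw [hbH, hbb])
    rw [← this] at he1
    exact (sq_le_one_iff₀ (schattenNorm_nonneg _ _)).1 he1
  · rw [schattenNorm_sq_eq (one_le_of_conj hpq) hU hd ha, hbH, hbb, ha]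
    refine hde.trans (le_of_eq ?_)
    have : U * diagonal (fun i => (d i : ℂ)) * Uᴴ * (U * diagonal (fun i => (e i : ℂ)) * Uᴴ)
        = U * diagonal (fun i => ((d i * e i : ℝ) : ℂ)) * Uᴴ := by
      calc _ = U * diagonal (fun i => (d i : ℂ)) * (Uᴴ * U) * diagonal (fun i => (e i : ℂ)) * Uᴴ := by
            simp only [mul_assoc]
        _ = _ := by
            rw [hUU', mul_one, mul_assoc U, diagonal_mul_diagonal]
            simp
    rw [this, trace_mul_comm, ← mul_assoc, hUU', one_mul, trace_diagonal, ← Complex.ofReal_sum,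
      Complex.ofReal_re]

theorem exists_pos_schattenNorm_smul_one_le (hp : 1 ≤ p) :
    ∃ r : ℝ, 0 < r ∧ schattenNorm (2 * p) ((r : ℂ) • (1 : Matrix ι ι ℂ)) ≤ 1 := by
  have key : ∀ r : ℝ, 0 ≤ r → schattenNorm (2 * p) ((r : ℂ) • (1 : Matrix ι ι ℂ)) ^ 2
      = eigNorm p (fun _ : ι => r ^ 2) := by
    intro r hr
    refine schattenNorm_sq_eq hp (one_mem _) (fun _ => sq_nonneg r) ?_
    simp only [conjTranspose_smul, conjTranspose_one, one_mul, mul_one, smul_mul_smul_comm]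
    simp [smul_one_eq_diagonal, sq]
  suffices h : ∃ r : ℝ, 0 < r ∧ eigNorm p (fun _ : ι => r ^ 2) ≤ 1 by
    obtain ⟨r, hr, h⟩ := h
    refine ⟨r, hr, ?_⟩
    rw [← key r hr.le] at h
    exact (sq_le_one_iff₀ (schattenNorm_nonneg _ _)).1 h
  unfold eigNorm
  split_ifs with hp'
  · refine ⟨1, one_pos, ?_⟩
    simp only [one_pow]
    exact Real.iSup_le (fun _ => le_rfl) zero_le_one
  · have hp1 : 1 ≤ p.toReal := by
      rw [← ENNReal.toReal_one]; exact ENNReal.toReal_mono hp' hp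
    set c : ℝ := (Fintype.card ι : ℝ) + 1
    have hc : 1 ≤ c := by simp [c]
    refine ⟨Real.sqrt c⁻¹, by positivity, ?_⟩
    refine Real.rpow_le_one (by positivity) ?_ (by positivity)
    rw [Real.sq_sqrt (by positivity), Finset.sum_const, Finset.card_univ, nsmul_eq_mul]
    have h1 : c⁻¹ ^ p.toReal ≤ c⁻¹ :=
      Real.rpow_le_self_of_le_one (by positivity) (inv_le_one_of_one_le₀ hc) hp1
    calc (Fintype.card ι : ℝ) * c⁻¹ ^ p.toReal ≤ c * c⁻¹ :=
          mul_le_mul (by simp [c]) h1 (by positivity) (by positivity)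
      _ = 1 := mul_inv_cancel₀ (by positivity)

end Schatten

theorem isClosed_posSemidef {ι : Type} [Fintype ι] :
    IsClosed {s : Matrix ι ι ℂ | s.PosSemidef} := by
  simp only [posSemidef_iff_dotProduct_mulVec, Set.ofPred_and, Set.ofPred_forall]
  refine IsClosed.inter ?_ (isClosed_iInter fun x => ?_)
  · exact isClosed_eq (by fun_prop) continuous_id
  · exact isClosed_le continuous_const (by fun_prop)

theorem convex_posSemidef {ι : Type} : Convex ℝ {s : Matrix ι ι ℂ | s.PosSemidef} :=
  fun _ hs _ ht _ _ ha hb _ => (hs.smul ha).add (ht.smul hb)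

section DualBall

variable {ι : Type} [Fintype ι] [DecidableEq ι] {p q : ℝ≥0∞}

/-- The positive semidefinite matrices whose trace against `b * bᴴ` is at most one for all `b` in
the unit ball of `S_{2q}`. -/
def dualBall (ι : Type) [Fintype ι] [DecidableEq ι] (q : ℝ≥0∞) : Set (Matrix ι ι ℂ) :=
  {s | s.PosSemidef ∧ ∀ b : Matrix ι ι ℂ, schattenNorm (2 * q) b ≤ 1 →
    (s * (b * bᴴ)).trace.re ≤ 1}

theorem norm_apply_le_trace_re {s : Matrix ι ι ℂ} (hs : s.PosSemidef) (i j : ι) :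
    ‖s i j‖ ≤ s.trace.re := by
  obtain ⟨U, hU, d, hd, h⟩ := exists_unitary_diagonal hs
  have hUU : Uᴴ * U = 1 := Matrix.mem_unitaryGroup_iff'.1 hU
  have htr : s.trace.re = ∑ k, d k := by
    rw [h, trace_mul_comm, ← mul_assoc, hUU, one_mul, trace_diagonal, ← Complex.ofReal_sum,
      Complex.ofReal_re]
  rw [htr, h, Matrix.mul_apply]
  refine (norm_sum_le _ _).trans (Finset.sum_le_sum fun k _ => ?_)
  rw [mul_diagonal, conjTranspose_apply, norm_mul, norm_mul, norm_star, Complex.norm_real,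
    Real.norm_of_nonneg (hd k)]
  calc ‖U i k‖ * d k * ‖U j k‖ ≤ 1 * d k * 1 := by
        gcongr
        · exact mul_nonneg zero_le_one (hd k)
        · exact hd k
        · exact entry_norm_bound_of_unitary hU i k
        · exact entry_norm_bound_of_unitary hU j k
    _ = d k := by ring

theorem isCompact_of_trace_le {K : Set (Matrix ι ι ℂ)} (hK : IsClosed K)
    (hpos : ∀ s ∈ K, s.PosSemidef) {R : ℝ} (hR : ∀ s ∈ K, s.trace.re ≤ R) : IsCompact K := by
  have hbox : IsCompact (Set.univ.pi fun _ : ι => Set.univ.pi fun _ : ι =>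
      Metric.closedBall (0 : ℂ) R) :=
    isCompact_univ_pi fun _ => isCompact_univ_pi fun _ => isCompact_closedBall 0 R
  refine IsCompact.of_isClosed_subset hbox hK fun s hs => ?_
  exact fun i _ j _ => mem_closedBall_zero_iff.2 <|
    (norm_apply_le_trace_re (hpos s hs) i j).trans (hR s hs)

theorem exists_trace_le_of_mem_dualBall (hq : 1 ≤ q) :
    ∃ R : ℝ, 0 ≤ R ∧ ∀ s ∈ dualBall ι q, s.trace.re ≤ R := by
  obtain ⟨r, hr, h⟩ := exists_pos_schattenNorm_smul_one_le (ι := ι) hq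
  refine ⟨(r ^ 2)⁻¹, by positivity, fun s hs => ?_⟩
  have h1 := hs.2 _ h
  have h2 : s * (((r : ℂ) • (1 : Matrix ι ι ℂ)) * ((r : ℂ) • (1 : Matrix ι ι ℂ))ᴴ)
      = ((r ^ 2 : ℝ) : ℂ) • s := by
    rw [conjTranspose_smul, conjTranspose_one, smul_mul_smul_comm, mul_one, RCLike.star_def,
      Complex.conj_ofReal, mul_smul_comm, mul_one, ← Complex.ofReal_mul, ← sq]
  rw [h2, trace_smul, smul_eq_mul, Complex.re_ofReal_mul] at h1
  rw [← one_div, le_div_iff₀ (by positivity)]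
  linarith

theorem isCompact_dualBall (hq : 1 ≤ q) : IsCompact (dualBall ι q) := by
  obtain ⟨R, -, hR⟩ := exists_trace_le_of_mem_dualBall (ι := ι) hq
  refine isCompact_of_trace_le ?_ (fun s hs => hs.1) hR
  have : dualBall ι q = {s | s.PosSemidef} ∩ ⋂ (b : Matrix ι ι ℂ) (_ : schattenNorm (2 * q) b ≤ 1),
      {s | (s * (b * bᴴ)).trace.re ≤ 1} := by
    ext s
    simp [dualBall]
  rw [this]
  refine isClosed_posSemidef.inter (isClosed_iInter fun b => isClosed_iInter fun _ => ?_)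
  exact isClosed_le (by fun_prop) continuous_const

theorem convex_dualBall : Convex ℝ (dualBall ι q) := by
  intro s hs t ht a b ha hb hab
  refine ⟨convex_posSemidef hs.1 ht.1 ha hb hab, fun c hc => ?_⟩
  rw [add_mul, smul_mul_assoc, smul_mul_assoc, trace_add, trace_smul, trace_smul, Complex.add_re,
    Complex.smul_re, Complex.smul_re, smul_eq_mul, smul_eq_mul]
  nlinarith [hs.2 c hc, ht.2 c hc]

theorem conjTranspose_mul_self_mem_dualBall (hpq : p⁻¹ + q⁻¹ = 1) {a : Matrix ι ι ℂ}
    (ha : schattenNorm (2 * p) a ≤ 1) : aᴴ * a ∈ dualBall ι q := by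
  refine ⟨posSemidef_conjTranspose_mul_self a, fun b hb => ?_⟩
  refine (trace_conjTranspose_mul_self_mul_le hpq a b).trans ?_
  have h1 : schattenNorm (2 * p) a ^ 2 ≤ 1 := pow_le_one₀ (schattenNorm_nonneg _ _) ha
  have h2 : schattenNorm (2 * q) b ^ 2 ≤ 1 := pow_le_one₀ (schattenNorm_nonneg _ _) hb
  exact mul_le_one₀ h1 (sq_nonneg _) h2

theorem schattenNorm_le_one_of_mem_dualBall (hpq : p⁻¹ + q⁻¹ = 1) {a : Matrix ι ι ℂ}
    (ha : aᴴ * a ∈ dualBall ι q) : schattenNorm (2 * p) a ≤ 1 := by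
  obtain ⟨b, -, hb, hab⟩ := exists_schattenNorm_le_trace hpq a
  exact (sq_le_one_iff₀ (schattenNorm_nonneg _ _)).1 (hab.trans (ha.2 b hb))

theorem exists_mem_dualBall_schattenNorm_le (hpq : p⁻¹ + q⁻¹ = 1) (a : Matrix ι ι ℂ) :
    ∃ s ∈ dualBall ι q, schattenNorm (2 * q) a ^ 2 ≤ (s * (aᴴ * a)).trace.re := by
  obtain ⟨b, hbH, hb, hab⟩ := exists_schattenNorm_le_trace ((add_comm _ _).trans hpq) a
  refine ⟨bᴴ * b, conjTranspose_mul_self_mem_dualBall hpq hb, ?_⟩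
  rwa [trace_mul_comm, ← show b * bᴴ = bᴴ * b by rw [hbH]]

theorem exists_smul_one_mem_dualBall (hpq : p⁻¹ + q⁻¹ = 1) :
    ∃ r : ℝ, 0 < r ∧ r • (1 : Matrix ι ι ℂ) ∈ dualBall ι q := by
  obtain ⟨r, hr, h⟩ := exists_pos_schattenNorm_smul_one_le (ι := ι) (one_le_of_conj hpq)
  refine ⟨r ^ 2, by positivity, ?_⟩
  have h2 : (r ^ 2 : ℝ) • (1 : Matrix ι ι ℂ)
      = ((r : ℂ) • (1 : Matrix ι ι ℂ))ᴴ * ((r : ℂ) • (1 : Matrix ι ι ℂ)) := by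
    rw [conjTranspose_smul, conjTranspose_one, smul_mul_smul_comm, mul_one, RCLike.star_def,
      Complex.conj_ofReal, ← Complex.ofReal_mul, ← sq]
    exact (algebraMap_smul ℂ (r ^ 2) (1 : Matrix ι ι ℂ)).symm
  rw [h2]
  exact conjTranspose_mul_self_mem_dualBall hpq h

end DualBall

section OpNorm

open scoped Matrix.Norms.L2Operator

theorem star_dotProduct_self_eq {ι : Type} [Fintype ι] (x : ι → ℂ) :
    star x ⬝ᵥ x = ((‖(WithLp.toLp 2 x : EuclideanSpace ℂ ι)‖ ^ 2 : ℝ) : ℂ) := by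
  rw [EuclideanSpace.norm_sq_eq, dotProduct, Complex.ofReal_sum]
  refine Finset.sum_congr rfl fun i _ => ?_
  rw [Pi.star_apply, mul_comm, RCLike.star_def, Complex.mul_conj, Complex.normSq_eq_norm_sq]

variable {ι κ : Type} [Fintype ι] [DecidableEq ι] [Fintype κ]

theorem star_dotProduct_smul_one_sub_mulVec (A : Matrix κ ι ℂ) (c : ℝ) (x : ι → ℂ) :
    star x ⬝ᵥ (((c : ℂ) • (1 : Matrix ι ι ℂ) - Aᴴ * A) *ᵥ x) =
      ((c * ‖(WithLp.toLp 2 x : EuclideanSpace ℂ ι)‖ ^ 2 -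
        ‖(WithLp.toLp 2 (A *ᵥ x) : EuclideanSpace ℂ κ)‖ ^ 2 : ℝ) : ℂ) := by
  rw [sub_mulVec, dotProduct_sub, smul_mulVec, one_mulVec, dotProduct_smul,
    star_dotProduct_self_eq, ← mulVec_mulVec, dotProduct_mulVec, ← star_mulVec,
    star_dotProduct_self_eq]
  simp

theorem l2_opNorm_le_of_posSemidef {A : Matrix κ ι ℂ} {c : ℝ} (hc : 0 ≤ c)
    (h : (((c ^ 2 : ℝ) : ℂ) • (1 : Matrix ι ι ℂ) - Aᴴ * A).PosSemidef) : ‖A‖ ≤ c := by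
  rw [l2_opNorm_def]
  refine ContinuousLinearMap.opNorm_le_bound _ hc fun x => ?_
  refine le_of_sq_le_sq ?_ (by positivity)
  have h1 := h.dotProduct_mulVec_nonneg (WithLp.ofLp x)
  rw [star_dotProduct_smul_one_sub_mulVec, Complex.zero_le_real] at h1
  rw [mul_pow]
  exact sub_nonneg.1 h1

theorem posSemidef_of_l2_opNorm_le {A : Matrix κ ι ℂ} {c : ℝ} (h : ‖A‖ ≤ c) :
    (((c ^ 2 : ℝ) : ℂ) • (1 : Matrix ι ι ℂ) - Aᴴ * A).PosSemidef := by
  refine PosSemidef.of_dotProduct_mulVec_nonneg ?_ fun x => ?_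
  · simp [IsHermitian, conjTranspose_smul]
  · rw [star_dotProduct_smul_one_sub_mulVec, Complex.zero_le_real, sub_nonneg, ← mul_pow]
    refine pow_le_pow_left₀ (norm_nonneg _) ?_ 2
    exact (l2_opNorm_mulVec A (WithLp.toLp 2 x)).trans
      (mul_le_mul_of_nonneg_right h (norm_nonneg _))

theorem norm_dotProduct_mulVec_le (A : Matrix κ ι ℂ) (x : κ → ℂ) (y : ι → ℂ) :
    ‖x ⬝ᵥ (A *ᵥ y)‖ ≤ ‖A‖ * (Real.sqrt (∑ i, ‖x i‖ ^ 2) * Real.sqrt (∑ i, ‖y i‖ ^ 2)) := by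
  have h1 : x ⬝ᵥ (A *ᵥ y) = inner ℂ (WithLp.toLp 2 (star x) : EuclideanSpace ℂ κ)
      (WithLp.toLp 2 (A *ᵥ y)) := by
    simp [PiLp.inner_apply, dotProduct, mul_comm]
  have h2 : Real.sqrt (∑ i, ‖x i‖ ^ 2) = ‖(WithLp.toLp 2 (star x) : EuclideanSpace ℂ κ)‖ := by
    simp [EuclideanSpace.norm_eq]
  have h3 : Real.sqrt (∑ i, ‖y i‖ ^ 2) = ‖(WithLp.toLp 2 y : EuclideanSpace ℂ ι)‖ := by
    simp [EuclideanSpace.norm_eq]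
  rw [h1, h2, h3]
  refine (norm_inner_le_norm _ _).trans ?_
  have := mul_le_mul_of_nonneg_left (l2_opNorm_mulVec A (WithLp.toLp 2 y))
    (norm_nonneg (WithLp.toLp 2 (star x) : EuclideanSpace ℂ κ))
  refine this.trans (le_of_eq ?_)
  ring

end OpNorm

section PisierNorm

open scoped Matrix.Norms.L2Operator

variable {N n : ℕ} {p q : ℝ≥0∞}

theorem opNorm_eq_norm {ι : Type} [Fintype ι] [DecidableEq ι] (a : Matrix ι ι ℂ) :
    opNorm a = ‖a‖ := rfl

theorem pisierNorm_value_nonneg (p : ℝ≥0∞) (a b : Matrix (Fin N) (Fin N) ℂ)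
    (y : Matrix (Fin N × Fin n) (Fin N × Fin n) ℂ) :
    0 ≤ schattenNorm (2 * p) a * opNorm y * schattenNorm (2 * p) b :=
  mul_nonneg (mul_nonneg (schattenNorm_nonneg _ _) (norm_nonneg _)) (schattenNorm_nonneg _ _)

theorem pisierNorm_nonneg (p : ℝ≥0∞) (x : Matrix (Fin N × Fin n) (Fin N × Fin n) ℂ) :
    0 ≤ pisierNorm p x := by
  refine Real.sInf_nonneg ?_
  rintro r ⟨a, b, y, -, rfl⟩
  exact pisierNorm_value_nonneg p a b y

theorem pisierNorm_mul_mul_le (p : ℝ≥0∞) (a b : Matrix (Fin N) (Fin N) ℂ)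
    (y : Matrix (Fin N × Fin n) (Fin N × Fin n) ℂ) :
    pisierNorm p ((a ⊗ₖ (1 : Matrix (Fin n) (Fin n) ℂ)) * y *
      (b ⊗ₖ (1 : Matrix (Fin n) (Fin n) ℂ))) ≤
      schattenNorm (2 * p) a * opNorm y * schattenNorm (2 * p) b := by
  refine csInf_le ⟨0, ?_⟩ ⟨a, b, y, rfl, rfl⟩
  rintro r ⟨a, b, y, -, rfl⟩
  exact pisierNorm_value_nonneg p a b y

theorem exists_factorization_of_pisierNorm_lt {x : Matrix (Fin N × Fin n) (Fin N × Fin n) ℂ}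
    {r : ℝ} (h : pisierNorm p x < r) :
    ∃ (a b : Matrix (Fin N) (Fin N) ℂ) (y : Matrix (Fin N × Fin n) (Fin N × Fin n) ℂ),
      x = (a ⊗ₖ (1 : Matrix (Fin n) (Fin n) ℂ)) * y * (b ⊗ₖ (1 : Matrix (Fin n) (Fin n) ℂ)) ∧
      schattenNorm (2 * p) a * opNorm y * schattenNorm (2 * p) b < r := by
  obtain ⟨_, ⟨a, b, y, hx, rfl⟩, hr⟩ := exists_lt_of_csInf_lt
    (by exact ⟨_, 1, 1, x, by simp, rfl⟩) h
  exact ⟨a, b, y, hx, hr⟩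

theorem pisierNorm_smul_le (p : ℝ≥0∞) {c : ℝ} (hc : 0 ≤ c)
    (x : Matrix (Fin N × Fin n) (Fin N × Fin n) ℂ) :
    pisierNorm p ((c : ℂ) • x) ≤ c * pisierNorm p x := by
  rcases hc.eq_or_lt with rfl | hc
  · have := pisierNorm_mul_mul_le p (1 : Matrix (Fin N) (Fin N) ℂ) 1
      (0 : Matrix (Fin N × Fin n) (Fin N × Fin n) ℂ)
    simpa [opNorm_eq_norm] using this
  · refine le_of_forall_gt_imp_ge_of_dense fun r hr => ?_
    have hr' : pisierNorm p x < r / c := by rwa [lt_div_iff₀' hc]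
    obtain ⟨a, b, y, rfl, h⟩ := exists_factorization_of_pisierNorm_lt hr'
    have h1 := pisierNorm_mul_mul_le p a b ((c : ℂ) • y)
    rw [mul_smul_comm, smul_mul_assoc] at h1
    refine h1.trans ?_
    rw [opNorm_eq_norm, norm_smul, Complex.norm_real, Real.norm_of_nonneg hc.le, ← opNorm_eq_norm]
    rw [lt_div_iff₀' hc] at h
    linarith

theorem amp_smul (u : Matrix (Fin N) (Fin N) ℂ →ₗ[ℂ] Matrix (Fin N) (Fin N) ℂ) (c : ℂ)
    (x : Matrix (Fin N × Fin n) (Fin N × Fin n) ℂ) : amp u (c • x) = c • amp u x := by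
  ext ⟨i, k⟩ ⟨j, l⟩
  exact congrFun (congrFun (u.map_smul c (Matrix.of fun i j => x (i, k) (j, l))) i) j

theorem pisierNorm_amp_le {v : Matrix (Fin N) (Fin N) ℂ →ₗ[ℂ] Matrix (Fin N) (Fin N) ℂ}
    (hv : regNorm q v ≠ ⊤) (hn : n ≠ 0) {x : Matrix (Fin N × Fin n) (Fin N × Fin n) ℂ} {τ : ℝ}
    (hτ : 0 < τ) (hx : pisierNorm q x ≤ τ) :
    pisierNorm q (amp v x) ≤ (regNorm q v).toReal * τ := by
  obtain ⟨m, rfl⟩ := Nat.exists_eq_succ_of_ne_zero hn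
  have h1 : pisierNorm q (((τ⁻¹ : ℝ) : ℂ) • x) ≤ 1 := by
    refine (pisierNorm_smul_le q (by positivity) x).trans ?_
    rw [inv_mul_le_iff₀ hτ, mul_one]
    exact hx
  have h2 : ENNReal.ofReal (pisierNorm q (amp v (((τ⁻¹ : ℝ) : ℂ) • x))) ≤ regNorm q v :=
    le_iSup_of_le m (le_iSup₂_of_le _ h1 le_rfl)
  rw [ENNReal.ofReal_le_iff_le_toReal hv] at h2
  have h3 : amp v x = (τ : ℂ) • amp v (((τ⁻¹ : ℝ) : ℂ) • x) := by
    rw [amp_smul, smul_smul, ← Complex.ofReal_mul, mul_inv_cancel₀ hτ.ne', Complex.ofReal_one,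
      one_smul]
  rw [h3]
  refine (pisierNorm_smul_le q hτ.le _).trans ?_
  rw [mul_comm]
  exact mul_le_mul_of_nonneg_right h2 hτ.le

end PisierNorm

section Kronecker

open scoped Matrix.Norms.L2Operator

theorem l2_opNorm_kronecker_one_le {ι κ μ : Type} [Fintype ι] [DecidableEq ι] [Fintype κ]
    [DecidableEq κ] [Fintype μ] [DecidableEq μ] (A : Matrix κ ι ℂ) :
    ‖A ⊗ₖ (1 : Matrix μ μ ℂ)‖ ≤ ‖A‖ := by
  refine l2_opNorm_le_of_posSemidef (norm_nonneg _) ?_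
  have h := (posSemidef_of_l2_opNorm_le (le_refl ‖A‖)).kronecker
    (PosSemidef.one : (1 : Matrix μ μ ℂ).PosSemidef)
  refine (congrArg PosSemidef ?_).mpr h
  rw [conjTranspose_kronecker, ← mul_kronecker_mul, conjTranspose_one, one_mul,
    ← one_kronecker_one, ← smul_kronecker]
  ext
  simp [sub_mul]

theorem l2_opNorm_transpose_le {ι : Type} [Fintype ι] [DecidableEq ι] (A : Matrix ι ι ℂ) :
    ‖Aᵀ‖ ≤ ‖A‖ := by
  refine l2_opNorm_le_of_posSemidef (norm_nonneg _) ?_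
  have h := (posSemidef_of_l2_opNorm_le (l2_opNorm_conjTranspose A).le).transpose
  refine (congrArg PosSemidef ?_).mpr h
  ext i j
  simp [Matrix.mul_apply, Matrix.one_apply, eq_comm, mul_comm]

theorem l2_opNorm_submatrix_equiv_le {ι κ : Type} [Fintype ι] [DecidableEq ι] [Fintype κ]
    [DecidableEq κ] (A : Matrix ι ι ℂ) (e : κ ≃ ι) : ‖A.submatrix e e‖ ≤ ‖A‖ := by
  refine l2_opNorm_le_of_posSemidef (norm_nonneg _) ?_
  have h := (posSemidef_of_l2_opNorm_le (le_refl ‖A‖)).submatrix e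
  convert h using 1
  rw [conjTranspose_submatrix, submatrix_mul_equiv, ← submatrix_one_equiv e]
  rfl

theorem l2_opNorm_inv_mul_le_one {ι κ : Type} [Fintype ι] [DecidableEq ι] [Fintype κ]
    [DecidableEq κ] {α : Matrix ι ι ℂ} (hα : IsUnit α) {E : Matrix ι κ ℂ}
    (h : (α * αᴴ - E * Eᴴ).PosSemidef) : ‖α⁻¹ * E‖ ≤ 1 := by
  rw [← l2_opNorm_conjTranspose]
  refine l2_opNorm_le_of_posSemidef zero_le_one ?_
  have h1 := h.mul_mul_conjTranspose_same α⁻¹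
  convert h1 using 1
  have hd := (isUnit_iff_isUnit_det _).1 hα
  rw [conjTranspose_conjTranspose, mul_sub, sub_mul, ← mul_assoc α⁻¹ α, nonsing_inv_mul _ hd,
    one_mul, ← conjTranspose_mul α⁻¹ α, nonsing_inv_mul _ hd, conjTranspose_one,
    conjTranspose_mul]
  simp [Matrix.mul_assoc]

end Kronecker

section Pairing

open scoped Matrix.Norms.L2Operator

variable {N n : ℕ} {p q : ℝ≥0∞}

/-- The `(k, l)` block in `M_N` of an element of `M_N ⊗ M_n`. -/
def tensorBlock (x : Matrix (Fin N × Fin n) (Fin N × Fin n) ℂ) (k l : Fin n) :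
    Matrix (Fin N) (Fin N) ℂ :=
  Matrix.of fun i j => x (i, k) (j, l)

/-- The element of `M_N ⊗ M_N` obtained by pairing the `M_n` legs of `Y` and `y`. -/
def contraction (Y y : Matrix (Fin N × Fin n) (Fin N × Fin n) ℂ) :
    Matrix (Fin N × Fin N) (Fin N × Fin N) ℂ :=
  Matrix.of fun js ir => ∑ k, ∑ l, y (ir.2, k) (js.2, l) * Y (js.1, l) (ir.1, k)

theorem tensorBlock_mul_mul (γ δ : Matrix (Fin N) (Fin N) ℂ)
    (y : Matrix (Fin N × Fin n) (Fin N × Fin n) ℂ) (k l : Fin n) :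
    tensorBlock ((γ ⊗ₖ (1 : Matrix (Fin n) (Fin n) ℂ)) * y *
      (δ ⊗ₖ (1 : Matrix (Fin n) (Fin n) ℂ))) k l = γ * tensorBlock y k l * δ := by
  ext i j
  simp [tensorBlock, Matrix.mul_apply, Fintype.sum_prod_type, Matrix.one_apply]

theorem tensorBlock_contraction (Y y : Matrix (Fin N × Fin n) (Fin N × Fin n) ℂ) (s r : Fin N) :
    tensorBlock (contraction Y y) s r = ∑ k, ∑ l, y (r, k) (s, l) • tensorBlock Y l k := by
  ext j i
  simp [tensorBlock, contraction, Matrix.sum_apply]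

theorem trace_amp_mul (u : Matrix (Fin N) (Fin N) ℂ → Matrix (Fin N) (Fin N) ℂ)
    (x Y : Matrix (Fin N × Fin n) (Fin N × Fin n) ℂ) :
    (amp u x * Y).trace = ∑ k, ∑ l, (u (tensorBlock x k l) * tensorBlock Y l k).trace := by
  simp only [Matrix.trace, diag_apply, Matrix.mul_apply, Fintype.sum_prod_type]
  rw [Finset.sum_comm]
  refine Finset.sum_congr rfl fun k _ => ?_
  conv_rhs => rw [Finset.sum_comm]
  refine Finset.sum_congr rfl fun i _ => ?_
  rw [Finset.sum_comm]
  rfl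

theorem trace_amp_mul_eq_sum
    {u v : Matrix (Fin N) (Fin N) ℂ →ₗ[ℂ] Matrix (Fin N) (Fin N) ℂ}
    (hadj : ∀ x y : Matrix (Fin N) (Fin N) ℂ, (u x * y).trace = (x * v y).trace)
    (γ δ : Matrix (Fin N) (Fin N) ℂ) (y Y : Matrix (Fin N × Fin n) (Fin N × Fin n) ℂ) :
    (amp u ((γ ⊗ₖ (1 : Matrix (Fin n) (Fin n) ℂ)) * y *
      (δ ⊗ₖ (1 : Matrix (Fin n) (Fin n) ℂ))) * Y).trace =
      ∑ s, ∑ r, (δ * tensorBlock (amp v (contraction Y y)) s r * γ) s r := by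
  have h1 : ∀ s r, tensorBlock (amp v (contraction Y y)) s r =
      ∑ k, ∑ l, y (r, k) (s, l) • v (tensorBlock Y l k) := fun s r => by
    change v (tensorBlock (contraction Y y) s r) = _
    rw [tensorBlock_contraction]
    simp only [map_sum, map_smul]
  have h2 : ∀ k l, (γ * tensorBlock y k l * δ * v (tensorBlock Y l k)).trace =
      ∑ s, ∑ r, y (r, k) (s, l) * (δ * v (tensorBlock Y l k) * γ) s r := fun k l => by
    rw [mul_assoc, mul_assoc, trace_mul_comm, mul_assoc, Matrix.trace, Finset.sum_comm]
    rfl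
  rw [trace_amp_mul]
  simp only [tensorBlock_mul_mul, hadj, h1, h2, Matrix.mul_sum, Matrix.sum_mul, Matrix.sum_apply,
    mul_smul_comm, smul_mul_assoc, Matrix.smul_apply, smul_eq_mul]
  rw [Finset.sum_congr rfl fun k _ => Finset.sum_comm.trans
    (Finset.sum_congr rfl fun s _ => Finset.sum_comm), Finset.sum_comm]
  exact Finset.sum_congr rfl fun s _ => Finset.sum_comm

theorem norm_sum_tensorBlock_le (hpq : p⁻¹ + q⁻¹ = 1) (γ δ c d : Matrix (Fin N) (Fin N) ℂ)
    (z : Matrix (Fin N × Fin N) (Fin N × Fin N) ℂ) :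
    ‖∑ s, ∑ r, (δ * tensorBlock ((c ⊗ₖ (1 : Matrix (Fin N) (Fin N) ℂ)) * z *
      (d ⊗ₖ (1 : Matrix (Fin N) (Fin N) ℂ))) s r * γ) s r‖ ≤
      schattenNorm (2 * p) γ * schattenNorm (2 * p) δ *
        (schattenNorm (2 * q) c * opNorm z * schattenNorm (2 * q) d) := by
  have h1 : ∑ s, ∑ r, (δ * tensorBlock ((c ⊗ₖ (1 : Matrix (Fin N) (Fin N) ℂ)) * z *
      (d ⊗ₖ (1 : Matrix (Fin N) (Fin N) ℂ))) s r * γ) s r =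
      (fun js : Fin N × Fin N => (δ * c) js.2 js.1) ⬝ᵥ
        (z *ᵥ fun ir : Fin N × Fin N => (d * γ) ir.1 ir.2) := by
    simp only [tensorBlock_mul_mul]
    have h2 : ∀ s r, (δ * (c * tensorBlock z s r * d) * γ) s r =
        ((δ * c) * (tensorBlock z s r * (d * γ))) s r := fun s r => by simp only [mul_assoc]
    simp only [h2, dotProduct, mulVec, Fintype.sum_prod_type]
    rw [Finset.sum_comm (f := fun j s => (δ * c) s j * _)]
    refine Finset.sum_congr rfl fun s _ => ?_
    simp only [Matrix.mul_apply (M := δ * c)]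
    rw [Finset.sum_comm]
    refine Finset.sum_congr rfl fun j _ => ?_
    rw [← Finset.mul_sum]
    refine congrArg ((δ * c) s j * ·) ?_
    simp only [Matrix.mul_apply (M := tensorBlock z s _)]
    exact Finset.sum_comm
  have hs : ∀ a b : Matrix (Fin N) (Fin N) ℂ, ∑ i, ∑ j, ‖(a * b) i j‖ ^ 2 =
      (aᴴ * a * (b * bᴴ)).trace.re := fun a b => by
    have : aᴴ * a * (b * bᴴ) = aᴴ * (a * b) * bᴴ := by simp only [mul_assoc]
    rw [this, mul_assoc, trace_mul_comm, mul_assoc, ← conjTranspose_mul, Matrix.trace,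
      Complex.re_sum]
    refine Finset.sum_congr rfl fun i _ => ?_
    rw [diag_apply, Matrix.mul_apply, Complex.re_sum]
    refine Finset.sum_congr rfl fun j _ => ?_
    rw [conjTranspose_apply, RCLike.star_def, Complex.mul_conj, Complex.normSq_eq_norm_sq,
      Complex.ofReal_re]
  rw [h1]
  refine (norm_dotProduct_mulVec_le z _ _).trans ?_
  have h3 : Real.sqrt (∑ js : Fin N × Fin N, ‖(δ * c) js.2 js.1‖ ^ 2) ≤
      schattenNorm (2 * p) δ * schattenNorm (2 * q) c := by
    rw [Fintype.sum_prod_type, Finset.sum_comm, hs]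
    refine Real.sqrt_le_iff.2 ⟨mul_nonneg (schattenNorm_nonneg _ _) (schattenNorm_nonneg _ _), ?_⟩
    rw [mul_pow]
    exact trace_conjTranspose_mul_self_mul_le hpq δ c
  have h4 : Real.sqrt (∑ ir : Fin N × Fin N, ‖(d * γ) ir.1 ir.2‖ ^ 2) ≤
      schattenNorm (2 * q) d * schattenNorm (2 * p) γ := by
    rw [Fintype.sum_prod_type, hs]
    refine Real.sqrt_le_iff.2 ⟨mul_nonneg (schattenNorm_nonneg _ _) (schattenNorm_nonneg _ _), ?_⟩
    rw [mul_pow]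
    exact trace_conjTranspose_mul_self_mul_le ((add_comm _ _).trans hpq) d γ
  have h5 := mul_le_mul_of_nonneg_left (mul_le_mul h3 h4 (Real.sqrt_nonneg _)
    (mul_nonneg (schattenNorm_nonneg _ _) (schattenNorm_nonneg _ _))) (norm_nonneg z)
  refine h5.trans (le_of_eq ?_)
  rw [opNorm_eq_norm]
  ring

/-- A bound on `S_q^N[M_N]` for contractions against a product, by factoring through `yᵀ ⊗ 1`. -/
theorem pisierNorm_contraction_le {J : Type} [Fintype J] [DecidableEq J]
    {α β : Matrix (Fin N) (Fin N) ℂ} (hα : α.IsHermitian) (hαu : IsUnit α) (hβu : IsUnit β)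
    {E Z : Matrix (Fin N) (Fin n × J) ℂ}
    (hE : (α * αᴴ - E * Eᴴ).PosSemidef) (hZ : (β * βᴴ - Z * Zᴴ).PosSemidef)
    {Y : Matrix (Fin N × Fin n) (Fin N × Fin n) ℂ}
    (hY : ∀ j l i k, Y (j, l) (i, k) = ∑ ν, Z j (l, ν) * star (E i (k, ν)))
    (y : Matrix (Fin N × Fin n) (Fin N × Fin n) ℂ) :
    pisierNorm q (contraction Y y) ≤
      schattenNorm (2 * q) β * opNorm y * schattenNorm (2 * q) α := by
  let e : (Fin n × J) × Fin N ≃ (Fin N × Fin n) × J :=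
    ⟨fun a => ((a.2, a.1.1), a.1.2), fun a => ((a.1.2, a.2), a.1.1), fun _ => rfl, fun _ => rfl⟩
  let W := (yᵀ ⊗ₖ (1 : Matrix J J ℂ)).submatrix e e
  have hW : ‖W‖ ≤ ‖y‖ := (l2_opNorm_submatrix_equiv_le _ e).trans
    ((l2_opNorm_kronecker_one_le _).trans (l2_opNorm_transpose_le y))
  let g := ((β⁻¹ * Z) ⊗ₖ (1 : Matrix (Fin N) (Fin N) ℂ)) * W *
    ((α⁻¹ * E)ᴴ ⊗ₖ (1 : Matrix (Fin N) (Fin N) ℂ))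
  have hg : opNorm g ≤ opNorm y := by
    have h1 : ‖(β⁻¹ * Z) ⊗ₖ (1 : Matrix (Fin N) (Fin N) ℂ)‖ ≤ 1 :=
      (l2_opNorm_kronecker_one_le _).trans (l2_opNorm_inv_mul_le_one hβu hZ)
    have h2 : ‖(α⁻¹ * E)ᴴ ⊗ₖ (1 : Matrix (Fin N) (Fin N) ℂ)‖ ≤ 1 :=
      (l2_opNorm_kronecker_one_le _).trans
        ((l2_opNorm_conjTranspose _).le.trans (l2_opNorm_inv_mul_le_one hαu hE))
    rw [opNorm_eq_norm, opNorm_eq_norm]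
    calc ‖g‖ ≤ ‖(β⁻¹ * Z) ⊗ₖ (1 : Matrix (Fin N) (Fin N) ℂ)‖ * ‖W‖ *
          ‖(α⁻¹ * E)ᴴ ⊗ₖ (1 : Matrix (Fin N) (Fin N) ℂ)‖ :=
          (l2_opNorm_mul _ _).trans
            (mul_le_mul_of_nonneg_right (l2_opNorm_mul _ _) (norm_nonneg _))
      _ ≤ 1 * ‖y‖ * 1 := by gcongr
      _ = ‖y‖ := by ring
  have hdα := (isUnit_iff_isUnit_det _).1 hαu
  have hdβ := (isUnit_iff_isUnit_det _).1 hβu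
  have hfac : contraction Y y = (β ⊗ₖ (1 : Matrix (Fin N) (Fin N) ℂ)) * g *
      (α ⊗ₖ (1 : Matrix (Fin N) (Fin N) ℂ)) := by
    have h1 : (β ⊗ₖ (1 : Matrix (Fin N) (Fin N) ℂ)) * g *
        (α ⊗ₖ (1 : Matrix (Fin N) (Fin N) ℂ)) = (Z ⊗ₖ (1 : Matrix (Fin N) (Fin N) ℂ)) * W *
          (Eᴴ ⊗ₖ (1 : Matrix (Fin N) (Fin N) ℂ)) := by
      have h2 : (α⁻¹ * E)ᴴ * α = Eᴴ := by
        conv_lhs => rw [← hα.eq, ← conjTranspose_mul, ← Matrix.mul_assoc, hα.eq,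
          mul_nonsing_inv _ hdα, Matrix.one_mul]
      have h3 : β * (β⁻¹ * Z) = Z := by
        rw [← Matrix.mul_assoc, mul_nonsing_inv _ hdβ, Matrix.one_mul]
      simp only [g]
      rw [← Matrix.mul_assoc, ← Matrix.mul_assoc, ← mul_kronecker_mul, Matrix.mul_assoc,
        ← mul_kronecker_mul, h2, h3, Matrix.one_mul]
    rw [h1]
    ext ⟨j, s⟩ ⟨i, r⟩
    simp [contraction, hY, W, e, Matrix.mul_apply, Fintype.sum_prod_type, Matrix.one_apply]
    refine Finset.sum_congr rfl fun k _ => ?_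
    simp only [Finset.mul_sum, Finset.sum_mul]
    rw [Finset.sum_comm]
    exact Finset.sum_congr rfl fun ν _ => Finset.sum_congr rfl fun l _ => by ring
  rw [hfac]
  refine (pisierNorm_mul_mul_le q β α g).trans ?_
  exact mul_le_mul_of_nonneg_right
    (mul_le_mul_of_nonneg_left hg (schattenNorm_nonneg _ _)) (schattenNorm_nonneg _ _)

theorem norm_trace_amp_mul_le (hpq : p⁻¹ + q⁻¹ = 1) (hN : N ≠ 0)
    {u v : Matrix (Fin N) (Fin N) ℂ →ₗ[ℂ] Matrix (Fin N) (Fin N) ℂ}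
    (hadj : ∀ x y : Matrix (Fin N) (Fin N) ℂ, (u x * y).trace = (x * v y).trace)
    (hv : regNorm q v ≠ ⊤) (γ δ : Matrix (Fin N) (Fin N) ℂ)
    (y Y : Matrix (Fin N × Fin n) (Fin N × Fin n) ℂ) {τ : ℝ}
    (hτ : pisierNorm q (contraction Y y) ≤ τ) :
    ‖(amp u ((γ ⊗ₖ (1 : Matrix (Fin n) (Fin n) ℂ)) * y *
      (δ ⊗ₖ (1 : Matrix (Fin n) (Fin n) ℂ))) * Y).trace‖ ≤
      schattenNorm (2 * p) γ * schattenNorm (2 * p) δ * ((regNorm q v).toReal * τ) := by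
  rw [trace_amp_mul_eq_sum hadj]
  have h0 : 0 ≤ schattenNorm (2 * p) γ * schattenNorm (2 * p) δ :=
    mul_nonneg (schattenNorm_nonneg _ _) (schattenNorm_nonneg _ _)
  have key : ∀ ε : ℝ, 0 < ε → ‖∑ s, ∑ r, (δ * tensorBlock (amp v (contraction Y y)) s r * γ) s r‖ ≤
      schattenNorm (2 * p) γ * schattenNorm (2 * p) δ * ((regNorm q v).toReal * (τ + ε) + ε) := by
    intro ε hε
    have h1 : pisierNorm q (amp v (contraction Y y)) ≤ (regNorm q v).toReal * (τ + ε) :=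
      pisierNorm_amp_le hv hN (by linarith [pisierNorm_nonneg q (contraction Y y)]) (by linarith)
    obtain ⟨c, d, z, hz, hlt⟩ := exists_factorization_of_pisierNorm_lt
      (h1.trans_lt (lt_add_of_pos_right _ hε))
    rw [hz]
    exact (norm_sum_tensorBlock_le hpq γ δ c d z).trans (mul_le_mul_of_nonneg_left hlt.le h0)
  refine ge_of_tendsto (x := nhdsWithin (0 : ℝ) (Set.Ioi 0)) (f := fun ε : ℝ =>
    schattenNorm (2 * p) γ * schattenNorm (2 * p) δ * ((regNorm q v).toReal * (τ + ε) + ε))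
    (tendsto_nhdsWithin_of_tendsto_nhds ?_)
    (Filter.eventually_of_mem self_mem_nhdsWithin fun ε hε => key ε hε)
  have : Continuous fun ε : ℝ => schattenNorm (2 * p) γ * schattenNorm (2 * p) δ *
    ((regNorm q v).toReal * (τ + ε) + ε) := by fun_prop
  simpa using this.tendsto 0

end Pairing

section Minimax

variable {I : Type} [Fintype I]

/-- Density matrices: positive semidefinite matrices of trace one. -/
def densityMatrices (I : Type) [Fintype I] : Set (Matrix I I ℂ) :=
  {D | D.PosSemidef ∧ D.trace.re = 1}

theorem isCompact_densityMatrices [DecidableEq I] : IsCompact (densityMatrices I) := by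
  refine isCompact_of_trace_le (R := 1) ?_ (fun D hD => hD.1) fun D hD => hD.2.le
  exact isClosed_posSemidef.inter (isClosed_eq (by fun_prop) continuous_const)

theorem convex_densityMatrices : Convex ℝ (densityMatrices I) := by
  intro s hs t ht a b ha hb hab
  refine ⟨convex_posSemidef hs.1 ht.1 ha hb hab, ?_⟩
  rw [trace_add, trace_smul, trace_smul, Complex.add_re, Complex.smul_re, Complex.smul_re,
    hs.2, ht.2, smul_eq_mul, smul_eq_mul, mul_one, mul_one, hab]

theorem normalized_vecMulVec_mem_densityMatrices {x : I → ℂ} (hx : x ≠ 0) :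
    ((‖(WithLp.toLp 2 x : EuclideanSpace ℂ I)‖ ^ 2)⁻¹ : ℝ) • vecMulVec x (star x) ∈
      densityMatrices I := by
  have hx' : ‖(WithLp.toLp 2 x : EuclideanSpace ℂ I)‖ ≠ 0 := by simpa using hx
  refine ⟨(posSemidef_vecMulVec_self_star x).smul (by positivity), ?_⟩
  rw [trace_smul, trace_vecMulVec, dotProduct_comm, star_dotProduct_self_eq, Complex.smul_re,
    Complex.ofReal_re, smul_eq_mul, inv_mul_cancel₀ (by positivity)]

theorem nonempty_densityMatrices [Nonempty I] : (densityMatrices I).Nonempty :=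
  ⟨_, normalized_vecMulVec_mem_densityMatrices (one_ne_zero (α := I → ℂ))⟩

theorem posSemidef_of_forall_densityMatrices {M : Matrix I I ℂ} (hM : M.IsHermitian)
    (h : ∀ D ∈ densityMatrices I, 0 ≤ (M * D).trace.re) : M.PosSemidef := by
  refine PosSemidef.of_dotProduct_mulVec_nonneg hM fun x => ?_
  rcases eq_or_ne x 0 with rfl | hx
  · simp
  have h1 := h _ (normalized_vecMulVec_mem_densityMatrices hx)
  have hx' : ‖(WithLp.toLp 2 x : EuclideanSpace ℂ I)‖ ≠ 0 := by simpa using hx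
  rw [mul_smul_comm, trace_smul, Complex.smul_re, smul_eq_mul, mul_vecMulVec, trace_vecMulVec,
    dotProduct_comm] at h1
  have h2 : 0 ≤ (star x ⬝ᵥ M *ᵥ x).re := (mul_nonneg_iff_of_pos_left (by positivity)).1 h1
  refine Complex.nonneg_iff.2 ⟨h2, ?_⟩
  exact (hM.im_star_dotProduct_mulVec_self x).symm

theorem exists_posSemidef_of_forall_densityMatrices [DecidableEq I] [Nonempty I]
    {F : Type} [TopologicalSpace F] [AddCommGroup F] [Module ℝ F] [IsTopologicalAddGroup F]
    [ContinuousSMul ℝ F] {K : Set F}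
    (hK : IsCompact K) (hKc : Convex ℝ K) (hKn : K.Nonempty) {M : F → Matrix I I ℂ}
    (hMcont : Continuous M)
    (hMaff : ∀ s t (a b : ℝ), a + b = 1 → M (a • s + b • t) = a • M s + b • M t)
    (hMherm : ∀ s ∈ K, (M s).IsHermitian)
    (h : ∀ D ∈ densityMatrices I, ∀ ε : ℝ, 0 < ε → ∃ s ∈ K, -ε ≤ (M s * D).trace.re) :
    ∃ s ∈ K, (M s).PosSemidef := by
  obtain ⟨D₀, hD₀, s₀, hs₀, hsad⟩ := Sion.exists_isSaddlePointOn
    (f := fun (D : Matrix I I ℂ) (s : F) => (M s * D).trace.re)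
    (nonempty_densityMatrices (I := I)) convex_densityMatrices isCompact_densityMatrices
    (fun s _ => (Continuous.continuousOn (by fun_prop)).lowerSemicontinuousOn)
    (fun s _ => ConvexOn.quasiconvexOn ⟨convex_densityMatrices, fun D _ D' _ a b _ _ _ => by
      simp only [mul_add, mul_smul_comm, trace_add, trace_smul, Complex.add_re, Complex.smul_re,
        le_refl]⟩)
    hKc hKn hK
    (fun D _ => (Continuous.continuousOn (by fun_prop)).upperSemicontinuousOn)
    (fun D _ => ConcaveOn.quasiconcaveOn ⟨hKc, fun s _ t _ a b _ _ hab => by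
      simp only [hMaff s t a b hab, add_mul, smul_mul_assoc, trace_add, trace_smul,
        Complex.add_re, Complex.smul_re, le_refl]⟩)
  refine ⟨s₀, hs₀, posSemidef_of_forall_densityMatrices (hMherm s₀ hs₀) fun D hD => ?_⟩
  refine le_of_forall_pos_le_add fun ε hε => ?_
  obtain ⟨s, hs, hle⟩ := h D₀ hD₀ ε hε
  have := hsad D hD s hs
  simp only at this
  linarith

end Minimax

section Domination

open scoped Matrix.Norms.L2Operator

variable {N n : ℕ} {p q : ℝ≥0∞}

theorem exists_isHermitian_mul_self {ι : Type} [Fintype ι] [DecidableEq ι]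
    {A : Matrix ι ι ℂ} (hA : A.PosSemidef) : ∃ α : Matrix ι ι ℂ, α.IsHermitian ∧ α * α = A := by
  obtain ⟨U, hU, d, hd, h⟩ := exists_unitary_diagonal hA
  have hUU : Uᴴ * U = 1 := Matrix.mem_unitaryGroup_iff'.1 hU
  have hsq : (U * diagonal (fun i => (Real.sqrt (d i) : ℂ)) * Uᴴ) *
      (U * diagonal (fun i => (Real.sqrt (d i) : ℂ)) * Uᴴ) = A := by
    calc _ = U * diagonal (fun i => (Real.sqrt (d i) : ℂ)) * (Uᴴ * U) *
          (diagonal (fun i => (Real.sqrt (d i) : ℂ)) * Uᴴ) := by simp only [mul_assoc]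
      _ = U * (diagonal (fun i => (Real.sqrt (d i) : ℂ)) *
          diagonal (fun i => (Real.sqrt (d i) : ℂ))) * Uᴴ := by
        rw [hUU]
        simp only [mul_assoc, one_mul]
      _ = A := by
        rw [h, diagonal_mul_diagonal]
        simp only [← Complex.ofReal_mul, Real.mul_self_sqrt (hd _)]
  refine ⟨_, ?_, hsq⟩
  rw [IsHermitian, conjTranspose_mul, conjTranspose_mul, conjTranspose_conjTranspose,
    diagonal_conjTranspose, ← mul_assoc]
  congr 3
  ext i
  simp

theorem exists_isHermitian_isUnit_mul_self {ι : Type} [Fintype ι] [DecidableEq ι]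
    {A : Matrix ι ι ℂ} (hA : A.PosDef) :
    ∃ α : Matrix ι ι ℂ, α.IsHermitian ∧ IsUnit α ∧ α * α = A := by
  obtain ⟨α, hα, hαα⟩ := exists_isHermitian_mul_self hA.posSemidef
  refine ⟨α, hα, (isUnit_iff_isUnit_det _).2 ?_, hαα⟩
  have h := (isUnit_iff_isUnit_det _).1 hA.isUnit
  rw [← hαα, det_mul] at h
  exact isUnit_of_mul_isUnit_left h

/-- The block matrix whose positivity expresses that `w` is dominated by `s ⊗ 1` and `t ⊗ 1`. -/
noncomputable def dominationMatrix (C : ℝ) (w : Matrix (Fin N × Fin n) (Fin N × Fin n) ℂ)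
    (st : Matrix (Fin N) (Fin N) ℂ × Matrix (Fin N) (Fin N) ℂ) :
    Matrix ((Fin N × Fin n) ⊕ (Fin N × Fin n)) ((Fin N × Fin n) ⊕ (Fin N × Fin n)) ℂ :=
  fromBlocks (C • (st.1 ⊗ₖ (1 : Matrix (Fin n) (Fin n) ℂ))) (-w) (-wᴴ)
    (C • (st.2 ⊗ₖ (1 : Matrix (Fin n) (Fin n) ℂ)))

theorem continuous_dominationMatrix (C : ℝ) (w : Matrix (Fin N × Fin n) (Fin N × Fin n) ℂ) :
    Continuous (dominationMatrix C w) := by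
  refine Continuous.matrix_fromBlocks ?_ continuous_const continuous_const ?_
  · refine Continuous.const_smul ?_ C
    exact continuous_matrix fun i j => by
      simp only [kroneckerMap_apply]
      fun_prop
  · refine Continuous.const_smul ?_ C
    exact continuous_matrix fun i j => by
      simp only [kroneckerMap_apply]
      fun_prop

theorem dominationMatrix_affine (C : ℝ) (w : Matrix (Fin N × Fin n) (Fin N × Fin n) ℂ)
    (s t : Matrix (Fin N) (Fin N) ℂ × Matrix (Fin N) (Fin N) ℂ) (a b : ℝ) (hab : a + b = 1) :
    dominationMatrix C w (a • s + b • t) =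
      a • dominationMatrix C w s + b • dominationMatrix C w t := by
  have h : ∀ X : Matrix (Fin N × Fin n) (Fin N × Fin n) ℂ, X = a • X + b • X := fun X => by
    rw [← add_smul, hab, one_smul]
  rw [dominationMatrix, dominationMatrix, dominationMatrix, fromBlocks_smul, fromBlocks_smul,
    fromBlocks_add, ← h, ← h]
  simp only [Prod.fst_add, Prod.snd_add, Prod.smul_fst, Prod.smul_snd, add_kronecker,
    smul_kronecker, smul_add, smul_comm C]

theorem isHermitian_dominationMatrix (C : ℝ) (w : Matrix (Fin N × Fin n) (Fin N × Fin n) ℂ)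
    {st : Matrix (Fin N) (Fin N) ℂ × Matrix (Fin N) (Fin N) ℂ} (hs : st.1.IsHermitian)
    (ht : st.2.IsHermitian) : (dominationMatrix C w st).IsHermitian := by
  have h : ∀ s : Matrix (Fin N) (Fin N) ℂ, s.IsHermitian →
      (C • (s ⊗ₖ (1 : Matrix (Fin n) (Fin n) ℂ))).IsHermitian := fun s hs => by
    rw [IsHermitian, conjTranspose_smul, conjTranspose_kronecker, hs.eq, conjTranspose_one,
      star_trivial]
  exact IsHermitian.fromBlocks (h _ hs) (by simp) (h _ ht)

theorem trace_kronecker_one_mul {J : Type} [Fintype J] (s : Matrix (Fin N) (Fin N) ℂ)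
    {E : Matrix (Fin N) (Fin n × J) ℂ} {D : Matrix (Fin N × Fin n) (Fin N × Fin n) ℂ}
    (hD : ∀ j l i k, D (j, l) (i, k) = ∑ ν, E j (l, ν) * star (E i (k, ν))) :
    ((s ⊗ₖ (1 : Matrix (Fin n) (Fin n) ℂ)) * D).trace = (s * (E * Eᴴ)).trace := by
  simp only [Matrix.trace, diag_apply, Matrix.mul_apply, Fintype.sum_prod_type,
    kroneckerMap_apply, Matrix.one_apply, hD, conjTranspose_apply, mul_ite, mul_one, mul_zero,
    ite_mul, zero_mul, Finset.sum_ite_eq, Finset.mem_univ, if_true]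
  refine Finset.sum_congr rfl fun i _ => ?_
  rw [Finset.sum_comm]
  exact Finset.sum_congr rfl fun j _ => (Finset.mul_sum _ _ _).symm

theorem trace_dominationMatrix_mul_re (C : ℝ) (w : Matrix (Fin N × Fin n) (Fin N × Fin n) ℂ)
    (s t : Matrix (Fin N) (Fin N) ℂ)
    {D : Matrix ((Fin N × Fin n) ⊕ (Fin N × Fin n)) ((Fin N × Fin n) ⊕ (Fin N × Fin n)) ℂ}
    (hD : D.IsHermitian) :
    (dominationMatrix C w (s, t) * D).trace.re =
      C * (((s ⊗ₖ (1 : Matrix (Fin n) (Fin n) ℂ)) * D.toBlocks₁₁).trace.re +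
        ((t ⊗ₖ (1 : Matrix (Fin n) (Fin n) ℂ)) * D.toBlocks₂₂).trace.re) -
      2 * (w * D.toBlocks₂₁).trace.re := by
  have h12 : D.toBlocks₁₂ = D.toBlocks₂₁ᴴ := by
    ext i j
    exact (congrFun (congrFun hD (Sum.inl i)) (Sum.inr j)).symm
  have h1 : (wᴴ * D.toBlocks₁₂).trace.re = (w * D.toBlocks₂₁).trace.re := by
    rw [h12, ← conjTranspose_mul, trace_conjTranspose, trace_mul_comm]
    rfl
  conv_lhs => rw [← fromBlocks_toBlocks D, dominationMatrix, fromBlocks_multiply,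
    Matrix.trace, Fintype.sum_sum_type]
  change ((C • (s ⊗ₖ (1 : Matrix (Fin n) (Fin n) ℂ)) * D.toBlocks₁₁ +
    -w * D.toBlocks₂₁).trace + (-wᴴ * D.toBlocks₁₂ +
      C • (t ⊗ₖ (1 : Matrix (Fin n) (Fin n) ℂ)) * D.toBlocks₂₂).trace).re = _
  simp only [smul_mul_assoc, neg_mul, trace_add, trace_neg, trace_smul, Complex.add_re,
    Complex.neg_re, Complex.smul_re, h1, smul_eq_mul]
  ring

/-- A trace estimate for `w` against all positive block matrices yields, by minimax, a
domination of `w`. -/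
theorem exists_dominationMatrix_posSemidef (hpq : p⁻¹ + q⁻¹ = 1) (hN : N ≠ 0) (hn : n ≠ 0)
    {C : ℝ} (hC : 0 < C) {w : Matrix (Fin N × Fin n) (Fin N × Fin n) ℂ}
    (hw : ∀ (α β : Matrix (Fin N) (Fin N) ℂ), α.IsHermitian → IsUnit α → β.IsHermitian →
      IsUnit β → ∀ E Z : Matrix (Fin N) (Fin n × ((Fin N × Fin n) ⊕ (Fin N × Fin n))) ℂ,
      (α * αᴴ - E * Eᴴ).PosSemidef → (β * βᴴ - Z * Zᴴ).PosSemidef →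
      ∀ Y : Matrix (Fin N × Fin n) (Fin N × Fin n) ℂ,
      (∀ j l i k, Y (j, l) (i, k) = ∑ ν, Z j (l, ν) * star (E i (k, ν))) →
      ‖(w * Y).trace‖ ≤ C * (schattenNorm (2 * q) α * schattenNorm (2 * q) β)) :
    ∃ s ∈ dualBall (Fin N) q, ∃ t ∈ dualBall (Fin N) q,
      (dominationMatrix C w (s, t)).PosSemidef := by
  have hq : 1 ≤ q := one_le_of_conj ((add_comm _ _).trans hpq)
  have : NeZero N := ⟨hN⟩
  have : NeZero n := ⟨hn⟩
  obtain ⟨R, hR0, hR⟩ := exists_trace_le_of_mem_dualBall (ι := Fin N) hq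
  obtain ⟨r, -, hr⟩ := exists_smul_one_mem_dualBall (ι := Fin N) hpq
  have hne : (dualBall (Fin N) q).Nonempty := ⟨_, hr⟩
  suffices h : ∀ D ∈ densityMatrices ((Fin N × Fin n) ⊕ (Fin N × Fin n)), ∀ ε : ℝ, 0 < ε →
      ∃ st ∈ dualBall (Fin N) q ×ˢ dualBall (Fin N) q,
        -ε ≤ (dominationMatrix C w st * D).trace.re by
    obtain ⟨⟨s, t⟩, ⟨hs, ht⟩, hst⟩ := exists_posSemidef_of_forall_densityMatrices
      ((isCompact_dualBall (ι := Fin N) hq).prod (isCompact_dualBall hq))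
      (convex_dualBall.prod convex_dualBall) (hne.prod hne) (continuous_dominationMatrix C w)
      (dominationMatrix_affine C w)
      (fun st h => isHermitian_dominationMatrix C w h.1.1.isHermitian h.2.1.isHermitian) h
    exact ⟨s, hs, t, ht, hst⟩
  intro D hD ε hε
  obtain ⟨G, hG⟩ : ∃ G, D = G * Gᴴ := by
    obtain ⟨G, hGH, hGG⟩ := exists_isHermitian_mul_self hD.1
    exact ⟨G, by rw [hGH.eq, hGG]⟩
  set E : Matrix (Fin N) (Fin n × ((Fin N × Fin n) ⊕ (Fin N × Fin n))) ℂ :=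
    Matrix.of fun i kν => G (Sum.inl (i, kν.1)) kν.2 with hE
  set Z : Matrix (Fin N) (Fin n × ((Fin N × Fin n) ⊕ (Fin N × Fin n))) ℂ :=
    Matrix.of fun i kν => G (Sum.inr (i, kν.1)) kν.2 with hZ
  have h11 : ∀ j l i k, D.toBlocks₁₁ (j, l) (i, k) = ∑ ν, E j (l, ν) * star (E i (k, ν)) :=
    fun j l i k => by rw [hG]; rfl
  have h22 : ∀ j l i k, D.toBlocks₂₂ (j, l) (i, k) = ∑ ν, Z j (l, ν) * star (Z i (k, ν)) :=
    fun j l i k => by rw [hG]; rfl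
  have h21 : ∀ j l i k, D.toBlocks₂₁ (j, l) (i, k) = ∑ ν, Z j (l, ν) * star (E i (k, ν)) :=
    fun j l i k => by rw [hG]; rfl
  set η : ℝ := ε / (2 * C * R + 1) with hη
  have hη0 : 0 < η := by positivity
  have hηε : 2 * C * R * η ≤ ε := by
    rw [hη, mul_div_assoc', div_le_iff₀ (by positivity)]
    nlinarith [mul_nonneg hC.le hR0]
  have hpert : ∀ X : Matrix (Fin N) (Fin n × ((Fin N × Fin n) ⊕ (Fin N × Fin n))) ℂ,
      ∃ α : Matrix (Fin N) (Fin N) ℂ, α.IsHermitian ∧ IsUnit α ∧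
        (α * αᴴ - X * Xᴴ).PosSemidef ∧ ∃ s ∈ dualBall (Fin N) q,
          schattenNorm (2 * q) α ^ 2 - η * R ≤ (s * (X * Xᴴ)).trace.re := by
    intro X
    have hone : (η • (1 : Matrix (Fin N) (Fin N) ℂ)).PosDef := PosDef.one.smul hη0
    obtain ⟨α, hα, hαu, hαα⟩ := exists_isHermitian_isUnit_mul_self
      (hone.posSemidef_add (posSemidef_self_mul_conjTranspose X))
    obtain ⟨s, hs, hle⟩ := exists_mem_dualBall_schattenNorm_le hpq α
    refine ⟨α, hα, hαu, ?_, s, hs, ?_⟩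
    · rw [hα.eq, hαα, add_sub_cancel_left]
      exact hone.posSemidef
    · rw [hα.eq, hαα, mul_add, mul_smul_comm, mul_one, trace_add, trace_smul, Complex.add_re,
        Complex.smul_re, smul_eq_mul] at hle
      nlinarith [hR s hs]
  obtain ⟨α, hα, hαu, hαE, s, hs, hsα⟩ := hpert E
  obtain ⟨β, hβ, hβu, hβZ, t, ht, htβ⟩ := hpert Z
  refine ⟨(s, t), ⟨hs, ht⟩, ?_⟩
  rw [trace_dominationMatrix_mul_re C w s t hD.1.isHermitian, trace_kronecker_one_mul s h11,
    trace_kronecker_one_mul t h22]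
  have h1 := (Complex.re_le_norm _).trans
    (hw α β hα hαu hβ hβu E Z hαE hβZ D.toBlocks₂₁ h21)
  have h2 : 0 ≤ C * (schattenNorm (2 * q) α - schattenNorm (2 * q) β) ^ 2 := by positivity
  have h3 := mul_le_mul_of_nonneg_left (add_le_add hsα htβ) hC.le
  nlinarith

theorem l2_opNorm_le_of_fromBlocks_posSemidef {ι : Type} [Fintype ι] [DecidableEq ι] {C : ℝ}
    (hC : 0 < C) {z : Matrix ι ι ℂ}
    (h : (fromBlocks (C • (1 : Matrix ι ι ℂ)) (-z) (-zᴴ) (C • (1 : Matrix ι ι ℂ))).PosSemidef) :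
    ‖z‖ ≤ C := by
  have hpd : (C • (1 : Matrix ι ι ℂ)).PosDef := PosDef.one.smul hC
  have hinv : (C • (1 : Matrix ι ι ℂ))⁻¹ = C⁻¹ • (1 : Matrix ι ι ℂ) :=
    inv_eq_right_inv (by rw [smul_mul_smul_comm, mul_inv_cancel₀ hC.ne', one_smul, one_mul])
  let _ := hpd.isUnit.invertible
  have h1 := (hpd.fromBlocks₁₁ (-z) (C • (1 : Matrix ι ι ℂ))).1
    (by rwa [conjTranspose_neg])
  refine l2_opNorm_le_of_posSemidef hC.le ?_
  have h2 := h1.smul hC.le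
  refine (congrArg PosSemidef ?_).mpr h2
  rw [hinv, conjTranspose_neg, neg_mul, neg_mul, mul_neg, neg_neg, mul_smul_comm, mul_one,
    smul_mul_assoc, smul_sub, smul_smul, smul_smul, mul_inv_cancel₀ hC.ne', one_smul, ← sq]
  congr 1

theorem pisierNorm_le_of_dominationMatrix_posSemidef (hpq : p⁻¹ + q⁻¹ = 1) {C : ℝ} (hC : 0 < C)
    {w : Matrix (Fin N × Fin n) (Fin N × Fin n) ℂ} {s t : Matrix (Fin N) (Fin N) ℂ}
    (hs : s ∈ dualBall (Fin N) q) (ht : t ∈ dualBall (Fin N) q) (hsp : s.PosDef) (htp : t.PosDef)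
    (h : (dominationMatrix C w (s, t)).PosSemidef) : pisierNorm p w ≤ C := by
  obtain ⟨c, hc, hcu, hcc⟩ := exists_isHermitian_isUnit_mul_self hsp
  obtain ⟨d, hd, hdu, hdd⟩ := exists_isHermitian_isUnit_mul_self htp
  have hcn : schattenNorm (2 * p) c ≤ 1 :=
    schattenNorm_le_one_of_mem_dualBall hpq (by rwa [hc.eq, hcc])
  have hdn : schattenNorm (2 * p) d ≤ 1 :=
    schattenNorm_le_one_of_mem_dualBall hpq (by rwa [hd.eq, hdd])
  have hcd := (isUnit_iff_isUnit_det _).1 hcu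
  have hdet := (isUnit_iff_isUnit_det _).1 hdu
  set z := (c⁻¹ ⊗ₖ (1 : Matrix (Fin n) (Fin n) ℂ)) * w * (d⁻¹ ⊗ₖ (1 : Matrix (Fin n) (Fin n) ℂ))
    with hz
  have hherm : ∀ a : Matrix (Fin N) (Fin N) ℂ, a.IsHermitian →
      (a⁻¹ ⊗ₖ (1 : Matrix (Fin n) (Fin n) ℂ))ᴴ = a⁻¹ ⊗ₖ (1 : Matrix (Fin n) (Fin n) ℂ) := by
    intro a ha
    rw [conjTranspose_kronecker, conjTranspose_one, ha.inv.eq]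
  have hcancel : ∀ a b : Matrix (Fin N) (Fin N) ℂ, IsUnit a.det → a * a = b →
      (a⁻¹ ⊗ₖ (1 : Matrix (Fin n) (Fin n) ℂ)) * (C • (b ⊗ₖ (1 : Matrix (Fin n) (Fin n) ℂ))) *
        (a⁻¹ ⊗ₖ (1 : Matrix (Fin n) (Fin n) ℂ)) = C • 1 := by
    intro a b ha hab
    rw [mul_smul_comm, smul_mul_assoc, ← mul_kronecker_mul, ← mul_kronecker_mul, ← hab,
      ← mul_assoc, nonsing_inv_mul _ ha, one_mul, mul_nonsing_inv _ ha, mul_one, mul_one,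
      one_kronecker_one]
  have hzC : opNorm z ≤ C := by
    rw [opNorm_eq_norm]
    refine l2_opNorm_le_of_fromBlocks_posSemidef hC ?_
    have h1 := h.mul_mul_conjTranspose_same
      (fromBlocks (c⁻¹ ⊗ₖ (1 : Matrix (Fin n) (Fin n) ℂ)) 0 0
        (d⁻¹ ⊗ₖ (1 : Matrix (Fin n) (Fin n) ℂ)))
    convert h1 using 1
    rw [dominationMatrix, fromBlocks_conjTranspose, fromBlocks_multiply, fromBlocks_multiply,
      hherm c hc, hherm d hd]
    simp only [conjTranspose_zero, zero_mul, mul_zero, add_zero, zero_add, neg_zero,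
      hcancel c s hcd hcc, hcancel d t hdet hdd, mul_neg, neg_mul, hz, conjTranspose_mul,
      hherm c hc, hherm d hd, mul_assoc]
  have hw : w = (c ⊗ₖ (1 : Matrix (Fin n) (Fin n) ℂ)) * z *
      (d ⊗ₖ (1 : Matrix (Fin n) (Fin n) ℂ)) := by
    rw [hz, ← mul_assoc, ← mul_assoc, ← mul_kronecker_mul, mul_nonsing_inv _ hcd, mul_one,
      one_kronecker_one, one_mul, mul_assoc, ← mul_kronecker_mul, nonsing_inv_mul _ hdet, mul_one,
      one_kronecker_one, mul_one]
  rw [hw]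
  refine (pisierNorm_mul_mul_le p c d z).trans ?_
  calc schattenNorm (2 * p) c * opNorm z * schattenNorm (2 * p) d ≤ 1 * C * 1 := by
        have := schattenNorm_nonneg (2 * p) d
        have : 0 ≤ opNorm z := norm_nonneg z
        gcongr
    _ = C := by ring

theorem pisierNorm_le_of_dominationMatrix (hpq : p⁻¹ + q⁻¹ = 1) {C : ℝ} (hC : 0 < C)
    {w : Matrix (Fin N × Fin n) (Fin N × Fin n) ℂ} {s t : Matrix (Fin N) (Fin N) ℂ}
    (hs : s ∈ dualBall (Fin N) q) (ht : t ∈ dualBall (Fin N) q)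
    (h : (dominationMatrix C w (s, t)).PosSemidef) : pisierNorm p w ≤ C := by
  obtain ⟨r, hr, hr1⟩ := exists_smul_one_mem_dualBall (ι := Fin N) hpq
  have key : ∀ θ ∈ Set.Ioo (0 : ℝ) 1, (1 - θ) * pisierNorm p w ≤ C := by
    rintro θ ⟨hθ0, hθ1⟩
    have hθ : 0 < 1 - θ := sub_pos.2 hθ1
    have hpd : ∀ a : Matrix (Fin N) (Fin N) ℂ, a.PosSemidef →
        ((1 - θ) • a + θ • r • (1 : Matrix (Fin N) (Fin N) ℂ)).PosDef := fun a ha =>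
      ((PosDef.one.smul hr).smul hθ0).posSemidef_add (ha.smul hθ.le)
    have hle : pisierNorm p (((1 - θ : ℝ) : ℂ) • w) ≤ C := by
      refine pisierNorm_le_of_dominationMatrix_posSemidef hpq hC
        (convex_dualBall hs hr1 hθ.le hθ0.le (by ring))
        (convex_dualBall ht hr1 hθ.le hθ0.le (by ring)) (hpd s hs.1) (hpd t ht.1) ?_
      have h1 : (fromBlocks (1 : Matrix (Fin N × Fin n) (Fin N × Fin n) ℂ) 0 0
          (1 : Matrix (Fin N × Fin n) (Fin N × Fin n) ℂ)).PosSemidef := by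
        rw [fromBlocks_one]
        exact PosSemidef.one
      have h2 := (h.smul hθ.le).add (h1.smul (mul_pos (mul_pos hC hθ0) hr).le)
      convert h2 using 1
      rw [dominationMatrix, dominationMatrix, fromBlocks_smul, fromBlocks_smul, fromBlocks_add]
      simp only [add_kronecker, smul_kronecker, one_kronecker_one, smul_add, smul_zero, add_zero,
        smul_smul, smul_neg, conjTranspose_smul, RCLike.star_def, Complex.conj_ofReal, mul_comm,
        mul_left_comm]
      congr 1
    have hinv : w = (((1 - θ)⁻¹ : ℝ) : ℂ) • (((1 - θ : ℝ) : ℂ) • w) := by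
      rw [smul_smul, ← Complex.ofReal_mul, inv_mul_cancel₀ hθ.ne', Complex.ofReal_one, one_smul]
    have h3 := pisierNorm_smul_le p (inv_nonneg.2 hθ.le) (((1 - θ : ℝ) : ℂ) • w)
    rw [← hinv, le_inv_mul_iff₀ hθ] at h3
    exact h3.trans hle
  refine le_of_tendsto (x := nhdsWithin (0 : ℝ) (Set.Ioi 0))
    (f := fun θ : ℝ => (1 - θ) * pisierNorm p w) (tendsto_nhdsWithin_of_tendsto_nhds ?_)
    (Filter.eventually_of_mem (Ioo_mem_nhdsGT zero_lt_one) key)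
  have : Continuous fun θ : ℝ => (1 - θ) * pisierNorm p w := by fun_prop
  simpa using this.tendsto 0

end Domination

section Duality

variable {N n : ℕ} {p q : ℝ≥0∞}

theorem pisierNorm_amp_mul_mul_le (hpq : p⁻¹ + q⁻¹ = 1) (hN : N ≠ 0) (hn : n ≠ 0)
    {u v : Matrix (Fin N) (Fin N) ℂ →ₗ[ℂ] Matrix (Fin N) (Fin N) ℂ}
    (hadj : ∀ x y : Matrix (Fin N) (Fin N) ℂ, (u x * y).trace = (x * v y).trace)
    (hv : regNorm q v ≠ ⊤) (γ δ : Matrix (Fin N) (Fin N) ℂ)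
    (y : Matrix (Fin N × Fin n) (Fin N × Fin n) ℂ) :
    pisierNorm p (amp u ((γ ⊗ₖ (1 : Matrix (Fin n) (Fin n) ℂ)) * y *
      (δ ⊗ₖ (1 : Matrix (Fin n) (Fin n) ℂ)))) ≤
      (regNorm q v).toReal * (schattenNorm (2 * p) γ * opNorm y * schattenNorm (2 * p) δ) := by
  refine le_of_forall_gt_imp_ge_of_dense fun C hC => ?_
  have hC0 : 0 < C :=
    (mul_nonneg ENNReal.toReal_nonneg (pisierNorm_value_nonneg p γ δ y)).trans_lt hC
  obtain ⟨s, hs, t, ht, hst⟩ := exists_dominationMatrix_posSemidef hpq hN hn hC0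
    (w := amp u ((γ ⊗ₖ (1 : Matrix (Fin n) (Fin n) ℂ)) * y *
      (δ ⊗ₖ (1 : Matrix (Fin n) (Fin n) ℂ)))) (by
    intro α β hα hαu _ hβu E Z hE hZ Y hY
    refine (norm_trace_amp_mul_le hpq hN hadj hv γ δ y Y
      (pisierNorm_contraction_le hα hαu hβu hE hZ hY y)).trans ?_
    have h0 : 0 ≤ schattenNorm (2 * q) α * schattenNorm (2 * q) β :=
      mul_nonneg (schattenNorm_nonneg _ _) (schattenNorm_nonneg _ _)
    refine le_trans (le_of_eq ?_) (mul_le_mul_of_nonneg_right hC.le h0)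
    ring)
  exact pisierNorm_le_of_dominationMatrix hpq hC0 hs ht hst

theorem pisierNorm_eq_zero_of_isEmpty (p : ℝ≥0∞) (x : Matrix (Fin 0 × Fin n) (Fin 0 × Fin n) ℂ) :
    pisierNorm p x = 0 := by
  refine le_antisymm ?_ (pisierNorm_nonneg p x)
  have h := pisierNorm_smul_le p le_rfl x
  rwa [zero_mul, Subsingleton.elim (((0 : ℝ) : ℂ) • x) x] at h

theorem regNorm_le_of_trace_adjoint (hpq : p⁻¹ + q⁻¹ = 1)
    {u v : Matrix (Fin N) (Fin N) ℂ →ₗ[ℂ] Matrix (Fin N) (Fin N) ℂ}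
    (hadj : ∀ x y : Matrix (Fin N) (Fin N) ℂ, (u x * y).trace = (x * v y).trace) :
    regNorm p u ≤ regNorm q v := by
  by_cases hv : regNorm q v = ⊤
  · exact hv ▸ le_top
  refine iSup_le fun n => iSup₂_le fun x hx => ?_
  rw [ENNReal.ofReal_le_iff_le_toReal hv]
  rcases Nat.eq_zero_or_pos N with rfl | hN
  · rw [pisierNorm_eq_zero_of_isEmpty]
    exact ENNReal.toReal_nonneg
  have key : ∀ θ ∈ Set.Ioi (1 : ℝ), pisierNorm p (amp u x) ≤ (regNorm q v).toReal * θ := by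
    intro θ hθ
    obtain ⟨γ, δ, y, rfl, hlt⟩ := exists_factorization_of_pisierNorm_lt (hx.trans_lt hθ)
    exact (pisierNorm_amp_mul_mul_le hpq hN.ne' n.succ_ne_zero hadj hv γ δ y).trans
      (mul_le_mul_of_nonneg_left hlt.le ENNReal.toReal_nonneg)
  refine ge_of_tendsto (x := nhdsWithin (1 : ℝ) (Set.Ioi 1))
    (f := fun θ : ℝ => (regNorm q v).toReal * θ) (tendsto_nhdsWithin_of_tendsto_nhds ?_)
    (Filter.eventually_of_mem self_mem_nhdsWithin key)
  have : Continuous fun θ : ℝ => (regNorm q v).toReal * θ := by fun_prop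
  simpa using this.tendsto 1

end Duality

/-- Matrix-algebra case of the second part of Lemma 2.3: the regular norm of `u` relative to `p`
equals the regular norm of its trace adjoint relative to the conjugate exponent `p'`. -/
theorem regNorm_trace_adjoint {N : ℕ} (p q : ℝ≥0∞) (hp : 1 ≤ p) (hpq : p⁻¹ + q⁻¹ = 1)
    (u v : Matrix (Fin N) (Fin N) ℂ →ₗ[ℂ] Matrix (Fin N) (Fin N) ℂ)
    (hadj : ∀ x y : Matrix (Fin N) (Fin N) ℂ, (u x * y).trace = (x * v y).trace) :
    regNorm p (⇑u) = regNorm q (⇑v) := by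
  refine le_antisymm (regNorm_le_of_trace_adjoint hpq hadj)
    (regNorm_le_of_trace_adjoint ((add_comm _ _).trans hpq) fun x y => ?_)
  rw [trace_mul_comm, ← hadj, trace_mul_comm]
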